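/- arXiv:1506.03430 — 3 statements merged into one kernel-verified Lean document; each statement's English description precedes it below -/
import Mathlib

section
/- There exists a universal constant C > 0 such that the following holds. Suppose θ* ∈ M satisfies θ*_{ij} = θ*_i for some nondecreasing vector (θ*_1,…,θ*_{n1}) ∈ C_{n1} and all i, j, and suppose n·D(θ*) ≥ 2σ² where D(θ*) = (θ*_{n1 n2} − θ*_{11})². Then the isotonic least squares estimator satisfies R(θ*, θ̂) ≤ C·(log n)⁸·( σ² sqrt(D(θ*)) / n )^{2/3}. -/
open MeasureTheory ProbabilityTheory

noncomputable section

/-- The set of isotonic (coordinatewise nondecreasing) `n1 × n2` matrices. -/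
def Isotonic {n1 n2 : ℕ} (θ : Fin n1 → Fin n2 → ℝ) : Prop :=
  ∀ ⦃i k : Fin n1⦄ ⦃j l : Fin n2⦄, i ≤ k → j ≤ l → θ i j ≤ θ k l

/-- Squared Frobenius norm of a matrix. -/
def frobSq {n1 n2 : ℕ} (θ : Fin n1 → Fin n2 → ℝ) : ℝ :=
  ∑ i, ∑ j, θ i j ^ 2

/-- The law of an `n1 × n2` matrix with i.i.d. `N(0, σ²)` entries. -/
def noiseMeasure (n1 n2 : ℕ) (σ : ℝ) : Measure (Fin n1 → Fin n2 → ℝ) :=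
  Measure.pi fun _ => Measure.pi fun _ => gaussianReal 0 ⟨σ ^ 2, sq_nonneg σ⟩

/-- `lse` is the least squares estimator: for every data matrix `y`, `lse y` minimizes
the squared Frobenius distance to `y` over the cone of isotonic matrices. -/
def IsLSE {n1 n2 : ℕ} (lse : (Fin n1 → Fin n2 → ℝ) → Fin n1 → Fin n2 → ℝ) : Prop :=
  ∀ y, Isotonic (lse y) ∧ ∀ θ, Isotonic θ → frobSq (y - lse y) ≤ frobSq (y - θ)

/-- The risk `R(θ*, est) = E ‖est(θ* + ε) − θ*‖² / n`, where `ε` has i.i.d. `N(0,σ²)`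
entries and `n = n1 n2`. -/
def risk {n1 n2 : ℕ} (σ : ℝ) (θstar : Fin n1 → Fin n2 → ℝ)
    (est : (Fin n1 → Fin n2 → ℝ) → Fin n1 → Fin n2 → ℝ) : ℝ :=
  (∫ ε, frobSq (est (θstar + ε) - θstar) ∂noiseMeasure n1 n2 σ) / (n1 * n2)

/-- `D(θ) = (θ_{n1 n2} − θ_{11})²`, the squared range of an isotonic matrix. -/
def Dmat {n1 n2 : ℕ} (h1 : 0 < n1) (h2 : 0 < n2) (θ : Fin n1 → Fin n2 → ℝ) : ℝ :=
  (θ ⟨n1 - 1, Nat.sub_lt h1 one_pos⟩ ⟨n2 - 1, Nat.sub_lt h2 one_pos⟩ - θ ⟨0, h1⟩ ⟨0, h2⟩) ^ 2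

/-!
Fix a matrix `θ` with constant rows taking few distinct values. Minimality of the estimator bounds
its squared error by that of `θ` plus a pairing of the noise with `lse y - θ`, which is isotonic
on every block of rows where `θ` is constant. Superlevel and sublevel sets of an isotonic matrix are
staircases. Cutting at a median row peels off a full rectangle and halves the number of rows, so
after logarithmically many steps the noise sum over a staircase is controlled by the normalized
rectangle sums of the noise, and a layer-cake argument turns this into a bound for the pairing on
each block. Each normalized rectangle sum is sub-Gaussian with variance proxy `σ²`, so their maximum
is at most of order `σ log n`. Hence the risk is at most a constant multiple of the squared
approximation error plus, up to logarithms, `σ² / n` per block. Rounding the rows of `θ*` to a mesh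
`δ` creates at most `√D / δ + 1` blocks, and `δ³ = σ² √D / n` balances the two errors.
-/

section Intervals

open Finset

variable {α β : Type*} [Preorder α] [LocallyFiniteOrder α] [Preorder β] [LocallyFiniteOrder β]

/-- The largest normalized interval sum of `e` on a finite order: the least `Z ≥ 0` such that the
sum of `e` over any order interval `I` is at most `Z √|I|` in absolute value. In a product of two
chains the intervals are the rectangles. -/
def intervalNorm (e : α → ℝ) : ℝ :=
  ⨆ p : α × α, |∑ x ∈ Icc p.1 p.2, e x| / √(#(Icc p.1 p.2))

lemma intervalNorm_nonneg (e : α → ℝ) : 0 ≤ intervalNorm e :=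
  Real.iSup_nonneg fun _ => by positivity

lemma abs_sum_Icc_le [Finite α] (e : α → ℝ) (a b : α) :
    |∑ x ∈ Icc a b, e x| ≤ intervalNorm e * √(#(Icc a b)) := by
  rcases (Icc a b).eq_empty_or_nonempty with h | h
  · simp [h]
  · rw [← div_le_iff₀ (Real.sqrt_pos.2 (Nat.cast_pos.2 h.card_pos))]
    exact le_ciSup (f := fun p : α × α => |∑ x ∈ Icc p.1 p.2, e x| / √(#(Icc p.1 p.2)))
      (Set.finite_range _).bddAbove (a, b)

lemma intervalNorm_comp_orderReversing_le [Finite α] (e : α → ℝ) (φ : β ≃ α)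
    (hφ : ∀ x y, φ x ≤ φ y ↔ y ≤ x) : intervalNorm (e ∘ φ) ≤ intervalNorm e := by
  refine Real.iSup_le (fun p => ?_) (intervalNorm_nonneg e)
  have hIcc : Icc (φ p.2) (φ p.1) = (Icc p.1 p.2).map φ.toEmbedding := by
    ext x
    obtain ⟨y, rfl⟩ := φ.surjective x
    simp [hφ, and_comm]
  have h := abs_sum_Icc_le e (φ p.2) (φ p.1)
  rw [hIcc, sum_map, card_map] at h
  exact div_le_of_le_mul₀ (by positivity) (intervalNorm_nonneg e) h

end Intervals

section Staircases

open Finset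

variable {ι κ : Type*} [LinearOrder ι] [LinearOrder κ]

lemma exists_median {s : Finset ι} (hs : s.Nonempty) :
    ∃ i, 2 * #{x ∈ s | x < i} ≤ #s ∧ 2 * #{x ∈ s | i < x} ≤ #s := by
  set f := s.orderEmbOfFin rfl
  have hmap (p : ι → Prop) [DecidablePred p] : #{x ∈ s | p x} = #{k : Fin #s | p (f k)} := by
    conv_lhs => rw [← s.map_orderEmbOfFin_univ rfl, filter_map, card_map]
    rfl
  refine ⟨f ⟨#s / 2, Nat.div_lt_self hs.card_pos one_lt_two⟩, ?_⟩
  simp only [hmap, f.lt_iff_lt, filter_gt_eq_Iio, filter_lt_eq_Ioi, Fin.card_Iio, Fin.card_Ioi]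
  omega

lemma ordConnected_filter {α : Type*} [Preorder α] {s : Finset α} {p : α → Prop}
    [DecidablePred p] (hs : (s : Set α).OrdConnected) (hp : {x | p x}.OrdConnected) :
    ((s.filter p : Finset α) : Set α).OrdConnected := by
  rw [coe_filter]
  exact hs.inter hp

lemma ordConnected_map_toDual {α : Type*} [Preorder α] {s : Finset α}
    (hs : (s : Set α).OrdConnected) :
    (s.map OrderDual.toDual.toEmbedding : Set αᵒᵈ).OrdConnected := by
  rw [coe_map]
  exact (OrderDual.toDual.image_eq_preimage_symm _).symm ▸ hs.dual

lemma ordConnected_row (L : LowerSet (ι × κ)) (i : ι) : {y | (i, y) ∈ L}.OrdConnected :=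
  IsLowerSet.ordConnected fun _ _ h hy => L.lower (Prod.mk_le_mk.2 ⟨le_rfl, h⟩) hy

lemma ordConnected_compl_row (L : LowerSet (ι × κ)) (i : ι) : {y | (i, y) ∉ L}.OrdConnected :=
  IsUpperSet.ordConnected fun _ _ h hy hy' => hy (L.lower (Prod.mk_le_mk.2 ⟨le_rfl, h⟩) hy')

open Classical in
/-- The rows up to `i` contain a full rectangle over the columns that the staircase `L` occupies in
row `i`; what remains are two smaller staircases, to the right of that rectangle and below it. -/
lemma sum_lowerSet_split (L : LowerSet (ι × κ)) (e : ι × κ → ℝ) (s : Finset ι)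
    (t : Finset κ) (i : ι) :
    ∑ p ∈ s ×ˢ t with p ∈ L, e p =
      ∑ p ∈ {x ∈ s | x ≤ i} ×ˢ {y ∈ t | (i, y) ∈ L}, e p +
      ∑ p ∈ {x ∈ s | x < i} ×ˢ {y ∈ t | (i, y) ∉ L} with p ∈ L, e p +
      ∑ p ∈ {x ∈ s | i < x} ×ˢ {y ∈ t | (i, y) ∈ L} with p ∈ L, e p := by
  simp only [← filter_product, sum_filter, ← sum_add_distrib]
  refine sum_congr rfl fun ⟨x, y⟩ _ => ?_
  have hle (hxi : x ≤ i) (hy : (i, y) ∈ L) : (x, y) ∈ L :=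
    L.lower (show (x, y) ≤ (i, y) from ⟨hxi, le_rfl⟩) hy
  have hge (hix : i ≤ x) (hy : (x, y) ∈ L) : (i, y) ∈ L :=
    L.lower (show (i, y) ≤ (x, y) from ⟨hix, le_rfl⟩) hy
  rcases lt_trichotomy x i with h | rfl | h
  · by_cases hy : (i, y) ∈ L <;> simp [h, h.le, h.not_gt, hy, hle h.le]
  · by_cases hy : (x, y) ∈ L <;> simp [hy]
  · by_cases hy : (i, y) ∈ L
    · simp [h, h.not_ge, h.not_gt, hy]
    · simp [h, h.not_gt, hy, mt (hge h.le) hy]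

variable [LocallyFiniteOrder ι] [LocallyFiniteOrder κ]

lemma exists_eq_Icc_of_ordConnected {s : Finset ι} (hs : s.Nonempty)
    (hs' : (s : Set ι).OrdConnected) : ∃ a b, s = Icc a b := by
  refine ⟨s.min' hs, s.max' hs, Subset.antisymm (fun x hx => ?_) fun x hx => ?_⟩
  · exact mem_Icc.2 ⟨s.min'_le x hx, s.le_max' x hx⟩
  · exact hs'.out (s.min'_mem hs) (s.max'_mem hs) (mem_Icc.1 hx)

variable [Finite ι] [Finite κ]

lemma abs_sum_rectangle_le (e : ι × κ → ℝ) {s : Finset ι} {t : Finset κ}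
    (hs : (s : Set ι).OrdConnected) (ht : (t : Set κ).OrdConnected) :
    |∑ p ∈ s ×ˢ t, e p| ≤ intervalNorm e * √(#s * #t) := by
  rcases s.eq_empty_or_nonempty with rfl | hs₀
  · simp
  rcases t.eq_empty_or_nonempty with rfl | ht₀
  · simp
  obtain ⟨a, b, rfl⟩ := exists_eq_Icc_of_ordConnected hs₀ hs
  obtain ⟨c, d, rfl⟩ := exists_eq_Icc_of_ordConnected ht₀ ht
  rw [← Nat.cast_mul, ← card_product, Icc_product_Icc]
  exact abs_sum_Icc_le e (a, c) (b, d)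

lemma sqrt_mul_add_sqrt_mul_le {a b c d : ℝ} (ha : 0 ≤ a) (hb : 0 ≤ b) (hc : 0 ≤ c)
    (hd : 0 ≤ d) : √(a * d) + √(b * c) ≤ √((a + b) * (c + d)) := by
  apply Real.le_sqrt_of_sq_le
  rw [Real.sqrt_mul ha, Real.sqrt_mul hb]
  nlinarith [Real.sq_sqrt ha, Real.sq_sqrt hb, Real.sq_sqrt hc, Real.sq_sqrt hd,
    sq_nonneg (√a * √c - √b * √d)]

open Classical in
lemma abs_sum_lowerSet_le_add (e : ι × κ → ℝ) (L : LowerSet (ι × κ)) {s : Finset ι}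
    {t : Finset κ} (hs : (s : Set ι).OrdConnected) (ht : (t : Set κ).OrdConnected) (i : ι) :
    |∑ p ∈ s ×ˢ t with p ∈ L, e p| ≤
      intervalNorm e * √(#{x ∈ s | x ≤ i} * #{y ∈ t | (i, y) ∈ L}) +
      |∑ p ∈ {x ∈ s | x < i} ×ˢ {y ∈ t | (i, y) ∉ L} with p ∈ L, e p| +
      |∑ p ∈ {x ∈ s | i < x} ×ˢ {y ∈ t | (i, y) ∈ L} with p ∈ L, e p| := by
  rw [sum_lowerSet_split L e s t i]
  refine (abs_add_three _ _ _).trans ?_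
  gcongr
  exact abs_sum_rectangle_le e (ordConnected_filter hs Set.ordConnected_Iic)
    (ordConnected_filter ht (ordConnected_row L i))

open Classical in
lemma abs_sum_lowerSet_le_of_box (e : ι × κ → ℝ) (L : LowerSet (ι × κ)) {k : ℕ}
    {s : Finset ι} {t : Finset κ} (hs : (s : Set ι).OrdConnected)
    (ht : (t : Set κ).OrdConnected) (hk : #s < 2 ^ k) :
    |∑ p ∈ s ×ˢ t with p ∈ L, e p| ≤ intervalNorm e * k * √(#s * #t) := by
  induction k generalizing s t with
  | zero => simp [card_eq_zero.1 (Nat.lt_one_iff.1 hk)]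
  | succ k ih =>
    rcases s.eq_empty_or_nonempty with rfl | hs₀
    · simp
    obtain ⟨i, hlt, hgt⟩ := exists_median hs₀
    have hright := ih (ordConnected_filter hs (p := (· < i)) Set.ordConnected_Iio)
      (ordConnected_filter ht (ordConnected_compl_row L i)) (by omega)
    have hbelow := ih (ordConnected_filter hs (p := (i < ·)) Set.ordConnected_Ioi)
      (ordConnected_filter ht (ordConnected_row L i)) (by omega)
    have hcs : √(#{x ∈ s | x < i} * #{y ∈ t | (i, y) ∉ L} : ℝ) +
        √(#{x ∈ s | i < x} * #{y ∈ t | (i, y) ∈ L}) ≤ √(#s * #t) := by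
      refine (sqrt_mul_add_sqrt_mul_le (by positivity) (by positivity) (by positivity)
        (by positivity)).trans (Real.sqrt_le_sqrt ?_)
      norm_cast
      rw [card_filter_add_card_filter_not]
      gcongr
      omega
    have hN := intervalNorm_nonneg e
    calc |∑ p ∈ s ×ˢ t with p ∈ L, e p|
        ≤ _ := abs_sum_lowerSet_le_add e L hs ht i
      _ ≤ intervalNorm e * √(#s * #t) +
          intervalNorm e * k * √(#{x ∈ s | x < i} * #{y ∈ t | (i, y) ∉ L}) +
          intervalNorm e * k * √(#{x ∈ s | i < x} * #{y ∈ t | (i, y) ∈ L}) := by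
        gcongr <;> exact filter_subset _ _
      _ = intervalNorm e * √(#s * #t) + intervalNorm e * k *
          (√(#{x ∈ s | x < i} * #{y ∈ t | (i, y) ∉ L}) +
            √(#{x ∈ s | i < x} * #{y ∈ t | (i, y) ∈ L})) := by ring
      _ ≤ intervalNorm e * √(#s * #t) + intervalNorm e * k * √(#s * #t) := by gcongr
      _ = intervalNorm e * (k + 1 : ℕ) * √(#s * #t) := by push_cast; ring

open Classical in
lemma abs_sum_lowerSet_le (e : ι × κ → ℝ) (L : LowerSet (ι × κ)) {k : ℕ}
    {s : Finset ι} {t : Finset κ} (hs : (s : Set ι).OrdConnected)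
    (ht : (t : Set κ).OrdConnected) (hk : #s < 2 ^ k) :
    |∑ p ∈ s ×ˢ t with p ∈ L, e p| ≤
      intervalNorm e * k ^ 2 * √(#{p ∈ s ×ˢ t | p ∈ L}) := by
  induction k generalizing s t with
  | zero => simp [card_eq_zero.1 (Nat.lt_one_iff.1 hk)]
  | succ k ih =>
    rcases s.eq_empty_or_nonempty with rfl | hs₀
    · simp
    obtain ⟨i, hlt, hgt⟩ := exists_median hs₀
    have hright := ih (ordConnected_filter hs (p := (· < i)) Set.ordConnected_Iio)
      (ordConnected_filter ht (ordConnected_compl_row L i)) (by omega)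
    have hbelow := abs_sum_lowerSet_le_of_box e L (k := k)
      (ordConnected_filter hs (p := (i < ·)) Set.ordConnected_Ioi)
      (ordConnected_filter ht (ordConnected_row L i)) (by omega)
    have hrect : #{x ∈ s | x ≤ i} * #{y ∈ t | (i, y) ∈ L} ≤ #{p ∈ s ×ˢ t | p ∈ L} := by
      rw [← card_product, ← filter_product]
      refine card_le_card (monotone_filter_right _ fun p _ hp => ?_)
      exact L.lower (show p ≤ (i, p.2) from ⟨hp.1, le_rfl⟩) hp.2
    -- By the choice of the median, the box around the lower part is no larger than a rectangle
    -- inside `L`, so only the right part needs the induction hypothesis.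
    have hle : #{x ∈ s | i < x} ≤ #{x ∈ s | x ≤ i} := by
      have := card_filter_add_card_filter_not (s := s) (· ≤ i)
      simp only [not_le] at this
      omega
    have hN := intervalNorm_nonneg e
    calc |∑ p ∈ s ×ˢ t with p ∈ L, e p|
        ≤ _ := abs_sum_lowerSet_le_add e L hs ht i
      _ ≤ intervalNorm e * √(#{p ∈ s ×ˢ t | p ∈ L}) +
          intervalNorm e * k ^ 2 * √(#{p ∈ s ×ˢ t | p ∈ L}) +
          intervalNorm e * k * √(#{p ∈ s ×ˢ t | p ∈ L}) := by
        refine add_le_add_three ?_ (hright.trans ?_) (hbelow.trans ?_)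
        · gcongr
          exact_mod_cast hrect
        · gcongr <;> exact filter_subset _ _
        · gcongr
          exact_mod_cast (Nat.mul_le_mul_right _ hle).trans hrect
      _ = intervalNorm e * (1 + k ^ 2 + k) * √(#{p ∈ s ×ˢ t | p ∈ L}) := by ring
      _ ≤ intervalNorm e * (k + 1 : ℕ) ^ 2 * √(#{p ∈ s ×ˢ t | p ∈ L}) := by
        gcongr
        push_cast
        nlinarith [k.cast_nonneg (α := ℝ)]

open Classical in
lemma abs_sum_upperSet_le (e : ι × κ → ℝ) (U : UpperSet (ι × κ)) {k : ℕ}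
    {s : Finset ι} {t : Finset κ} (hs : (s : Set ι).OrdConnected)
    (ht : (t : Set κ).OrdConnected) (hk : #s < 2 ^ k) :
    |∑ p ∈ s ×ˢ t with p ∈ U, e p| ≤
      intervalNorm e * k ^ 2 * √(#{p ∈ s ×ˢ t | p ∈ U}) := by
  set φ : ιᵒᵈ × κᵒᵈ ≃ ι × κ := OrderDual.ofDual.prodCongr OrderDual.ofDual
  have h := abs_sum_lowerSet_le (e ∘ φ) ⟨φ ⁻¹' U, fun p q hqp hp => U.upper hqp hp⟩
    (ordConnected_map_toDual hs) (ordConnected_map_toDual ht) (by rwa [card_map])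
  rw [← prodMap_map_product, filter_map, sum_map, card_map] at h
  have hφ := intervalNorm_comp_orderReversing_le e φ fun _ _ => Iff.rfl
  exact h.trans (mul_le_mul_of_nonneg_right (mul_le_mul_of_nonneg_right hφ (by positivity))
    (by positivity))

end Staircases

section LayerCake

open Finset

variable {α : Type*} {s : Finset α} {e w : α → ℝ} {W : ℝ}

lemma sum_mul_sub_nonpos_of_sum_superlevel_nonpos {f w : α → ℝ} {c : ℝ}
    (hw : ∀ x ∈ s, c ≤ w x) (hf : ∀ t, c < t → ∑ x ∈ s with t ≤ w x, f x ≤ 0) :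
    ∑ x ∈ s, f x * (w x - c) ≤ 0 := by
  classical
  induction s using induction_on_min_value w generalizing c with
  | empty => simp
  | insert a s ha hmin ih =>
    have hrest : ∑ x ∈ s, f x * (w x - w a) ≤ 0 := ih hmin fun t ht => by
      have := hf t ((hw a (mem_insert_self a s)).trans_lt ht)
      rwa [filter_insert, if_neg ht.not_ge] at this
    have hbottom : (w a - c) * ∑ x ∈ insert a s, f x ≤ 0 := by
      rcases (hw a (mem_insert_self a s)).eq_or_lt with h | h
      · simp [h]
      · have := hf (w a) h
        rw [filter_true_of_mem (by simpa using hmin)] at this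
        exact mul_nonpos_of_nonneg_of_nonpos (sub_nonneg.2 h.le) this
    calc ∑ x ∈ insert a s, f x * (w x - c)
        = ∑ x ∈ insert a s, f x * (w x - w a) + (w a - c) * ∑ x ∈ insert a s, f x := by
          rw [mul_sum, ← sum_add_distrib]
          exact sum_congr rfl fun x _ => by ring
      _ = ∑ x ∈ s, f x * (w x - w a) + (w a - c) * ∑ x ∈ insert a s, f x := by
          rw [sum_insert ha, sub_self, mul_zero, zero_add]
      _ ≤ 0 := add_nonpos hrest hbottom

lemma sum_inv_rank_le_harmonic (w : α → ℝ) (s : Finset α) :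
    ∑ x ∈ s, (#{y ∈ s | w x ≤ w y} : ℝ)⁻¹ ≤ harmonic #s := by
  classical
  induction s using induction_on_min_value w with
  | empty => simp
  | insert a s ha hmin ih =>
    have hrank : #{y ∈ insert a s | w a ≤ w y} = #s + 1 := by
      rw [filter_true_of_mem (by simpa using hmin), card_insert_of_notMem ha]
    rw [sum_insert ha, card_insert_of_notMem ha, harmonic_succ, hrank, add_comm]
    push_cast
    gcongr
    refine (sum_le_sum fun x hx => ?_).trans ih
    have : 0 < #{y ∈ s | w x ≤ w y} := card_pos.2 ⟨x, by simp [hx]⟩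
    gcongr
    exact subset_insert a s

lemma sqrt_card_superlevel_le_sum_inv_sqrt_rank (w : α → ℝ) (s : Finset α) (t : ℝ) :
    √(#{x ∈ s | t ≤ w x}) ≤ ∑ x ∈ s with t ≤ w x, (√(#{y ∈ s | w x ≤ w y}))⁻¹ := by
  calc √(#{x ∈ s | t ≤ w x})
      = ∑ x ∈ s with t ≤ w x, (√(#{x ∈ s | t ≤ w x}))⁻¹ := by
        rw [sum_const, nsmul_eq_mul, ← div_eq_mul_inv, Real.div_sqrt]
    _ ≤ _ := sum_le_sum fun x hx => by
      have : 0 < #{y ∈ s | w x ≤ w y} := card_pos.2 ⟨x, by simp [(mem_filter.1 hx).1]⟩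
      have hsub : {y ∈ s | w x ≤ w y} ⊆ {y ∈ s | t ≤ w y} :=
        monotone_filter_right s fun y _ => (mem_filter.1 hx).2.trans
      gcongr

lemma sum_mul_le_sum_div_sqrt_rank (hW : 0 ≤ W) (hw : ∀ x ∈ s, 0 ≤ w x)
    (he : ∀ t > 0, ∑ x ∈ s with t ≤ w x, e x ≤ W * √(#{x ∈ s | t ≤ w x})) :
    ∑ x ∈ s, e x * w x ≤ ∑ x ∈ s, W * (√(#{y ∈ s | w x ≤ w y}))⁻¹ * w x := by
  have h := sum_mul_sub_nonpos_of_sum_superlevel_nonpos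
    (f := fun x => e x - W * (√(#{y ∈ s | w x ≤ w y}))⁻¹) hw fun t ht => by
      rw [sum_sub_distrib, ← mul_sum, sub_nonpos]
      exact (he t ht).trans
        (mul_le_mul_of_nonneg_left (sqrt_card_superlevel_le_sum_inv_sqrt_rank w s t) hW)
  simpa only [sub_zero, sub_mul, sum_sub_distrib, sub_nonpos] using h

lemma two_mul_sum_mul_le_of_nonneg (hW : 0 ≤ W) (hw : ∀ x ∈ s, 0 ≤ w x)
    (he : ∀ t > 0, ∑ x ∈ s with t ≤ w x, e x ≤ W * √(#{x ∈ s | t ≤ w x})) :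
    2 * ∑ x ∈ s, e x * w x ≤ (∑ x ∈ s, w x ^ 2) / 4 + 4 * W ^ 2 * harmonic #s := by
  calc 2 * ∑ x ∈ s, e x * w x
      ≤ 2 * ∑ x ∈ s, W * (√(#{y ∈ s | w x ≤ w y}))⁻¹ * w x :=
        mul_le_mul_of_nonneg_left (sum_mul_le_sum_div_sqrt_rank hW hw he) zero_le_two
    _ ≤ ∑ x ∈ s, (w x ^ 2 / 4 + 4 * W ^ 2 * (#{y ∈ s | w x ≤ w y} : ℝ)⁻¹) := by
        rw [mul_sum]
        refine sum_le_sum fun x _ => ?_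
        have hr : (#{y ∈ s | w x ≤ w y} : ℝ)⁻¹ = (√(#{y ∈ s | w x ≤ w y}))⁻¹ ^ 2 := by
          rw [inv_pow, Real.sq_sqrt (Nat.cast_nonneg _)]
        rw [hr]
        linarith [sq_nonneg (w x / 2 - 2 * W * (√(#{y ∈ s | w x ≤ w y}))⁻¹)]
    _ = (∑ x ∈ s, w x ^ 2) / 4 + 4 * W ^ 2 * ∑ x ∈ s, (#{y ∈ s | w x ≤ w y} : ℝ)⁻¹ := by
        rw [sum_add_distrib, ← mul_sum, sum_div]
    _ ≤ _ := by
        gcongr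
        exact sum_inv_rank_le_harmonic w s

lemma two_mul_sum_mul_le (hW : 0 ≤ W)
    (hpos : ∀ t > 0, |∑ x ∈ s with t ≤ w x, e x| ≤ W * √(#{x ∈ s | t ≤ w x}))
    (hneg : ∀ t > 0, |∑ x ∈ s with w x ≤ -t, e x| ≤ W * √(#{x ∈ s | w x ≤ -t})) :
    2 * ∑ x ∈ s, e x * w x ≤ (∑ x ∈ s, w x ^ 2) / 4 + 8 * W ^ 2 * harmonic #s := by
  have hmul (x) : e x * w x = e x * (w x)⁺ + -e x * (w x)⁻ := by
    rw [neg_mul, ← sub_eq_add_neg, ← mul_sub, posPart_sub_negPart]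
  have hsq (x) : w x ^ 2 = (w x)⁺ ^ 2 + (w x)⁻ ^ 2 := by
    rcases le_total 0 (w x) with h | h <;> simp [h]
  have h₁ := two_mul_sum_mul_le_of_nonneg (s := s) (e := e) (w := fun x => (w x)⁺) hW
    (fun x _ => posPart_nonneg (w x)) fun t ht => by
      simp only [posPart_def, le_sup_iff, ht.not_ge, or_false]
      exact (le_abs_self _).trans (hpos t ht)
  have h₂ := two_mul_sum_mul_le_of_nonneg (s := s) (e := fun x => -e x) (w := fun x => (w x)⁻) hW
    (fun x _ => negPart_nonneg (w x)) fun t ht => by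
      simp only [negPart_def, le_sup_iff, ht.not_ge, or_false, le_neg (a := t), sum_neg_distrib]
      exact (neg_le_abs _).trans (hneg t ht)
  simp only [hmul, hsq, sum_add_distrib]
  linarith

end LayerCake

section IsotonicPairing

open Finset

variable {ι κ : Type*} [LinearOrder ι] [LocallyFiniteOrder ι] [LinearOrder κ]
  [LocallyFiniteOrder κ] {w : ι × κ → ℝ}

section Rectangle

variable [Finite ι] [Finite κ] {k : ℕ} {s : Finset ι} {t : Finset κ}

lemma abs_sum_superlevel_le (e : ι × κ → ℝ) (hs : (s : Set ι).OrdConnected)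
    (ht : (t : Set κ).OrdConnected) (hk : #s < 2 ^ k)
    (hw : MonotoneOn w (s ×ˢ t : Finset (ι × κ))) (c : ℝ) :
    |∑ p ∈ s ×ˢ t with c ≤ w p, e p| ≤
      intervalNorm e * k ^ 2 * √(#{p ∈ s ×ˢ t | c ≤ w p}) := by
  classical
  have hU : ∀ p ∈ s ×ˢ t, p ∈ upperClosure {q | q ∈ s ×ˢ t ∧ c ≤ w q} ↔ c ≤ w p := fun p hp =>
    ⟨fun ⟨_, hq, hqp⟩ => hq.2.trans (hw hq.1 hp hqp), fun h => subset_upperClosure ⟨hp, h⟩⟩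
  rw [← filter_congr hU]
  convert abs_sum_upperSet_le e _ hs ht hk

lemma abs_sum_sublevel_le (e : ι × κ → ℝ) (hs : (s : Set ι).OrdConnected)
    (ht : (t : Set κ).OrdConnected) (hk : #s < 2 ^ k)
    (hw : MonotoneOn w (s ×ˢ t : Finset (ι × κ))) (c : ℝ) :
    |∑ p ∈ s ×ˢ t with w p ≤ c, e p| ≤
      intervalNorm e * k ^ 2 * √(#{p ∈ s ×ˢ t | w p ≤ c}) := by
  classical
  have hL : ∀ p ∈ s ×ˢ t, p ∈ lowerClosure {q | q ∈ s ×ˢ t ∧ w q ≤ c} ↔ w p ≤ c := fun p hp =>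
    ⟨fun ⟨_, hq, hpq⟩ => (hw hp hq.1 hpq).trans hq.2, fun h => subset_lowerClosure ⟨hp, h⟩⟩
  rw [← filter_congr hL]
  convert abs_sum_lowerSet_le e _ hs ht hk

lemma two_mul_sum_mul_le_of_monotoneOn (e : ι × κ → ℝ) (hs : (s : Set ι).OrdConnected)
    (ht : (t : Set κ).OrdConnected) (hk : #s < 2 ^ k)
    (hw : MonotoneOn w (s ×ˢ t : Finset (ι × κ))) :
    2 * ∑ p ∈ s ×ˢ t, e p * w p ≤ (∑ p ∈ s ×ˢ t, w p ^ 2) / 4 +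
      8 * (intervalNorm e * k ^ 2) ^ 2 * harmonic (#s * #t) := by
  have hN := intervalNorm_nonneg e
  have := two_mul_sum_mul_le (s := s ×ˢ t) (e := e) (w := w) (W := intervalNorm e * k ^ 2)
    (by positivity) (fun c _ => abs_sum_superlevel_le e hs ht hk hw c)
    (fun c _ => abs_sum_sublevel_le e hs ht hk hw (-c))
  rwa [card_product] at this

end Rectangle

lemma harmonic_mono : Monotone harmonic := fun _ _ h =>
  sum_le_sum_of_subset_of_nonneg (range_subset_range.2 h) fun _ _ _ => by positivity

lemma two_mul_sum_mul_le_of_monotoneOn_fibers [Fintype ι] [Fintype κ] {γ : Type*} [LinearOrder γ]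
    (e : ι × κ → ℝ) {f : ι → γ} (hf : Monotone f) {k : ℕ} (hk : Fintype.card ι < 2 ^ k)
    (hw : ∀ c, MonotoneOn w {p | f p.1 = c}) :
    2 * ∑ p, e p * w p ≤ (∑ p, w p ^ 2) / 4 + #(univ.image f) *
      (8 * (intervalNorm e * k ^ 2) ^ 2 * harmonic (Fintype.card ι * Fintype.card κ)) := by
  have hrows (c : γ) : ({i | f i = c} : Finset ι) ×ˢ (univ : Finset κ) =
      ({p | f p.1 = c} : Finset (ι × κ)) := by
    ext; simp
  have hblock (c : γ) : 2 * ∑ p with f p.1 = c, e p * w p ≤ (∑ p with f p.1 = c, w p ^ 2) / 4 +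
      8 * (intervalNorm e * k ^ 2) ^ 2 * harmonic (Fintype.card ι * Fintype.card κ) := by
    have h := two_mul_sum_mul_le_of_monotoneOn (s := {i | f i = c}) (t := univ) (k := k) e
      (by rw [coe_filter_univ]; exact Set.ordConnected_singleton.preimage_mono hf)
      (by simpa using Set.ordConnected_univ) ((card_filter_le _ _).trans_lt hk)
      ((hw c).mono (by simp [hrows]))
    rw [hrows] at h
    refine h.trans ?_
    gcongr
    exact harmonic_mono (Nat.mul_le_mul_right _ (card_filter_le _ _))
  have hsum (g : ι × κ → ℝ) : ∑ p, g p = ∑ c ∈ univ.image f, ∑ p with f p.1 = c, g p :=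
    (sum_fiberwise_of_maps_to (fun p _ => mem_image_of_mem f (mem_univ p.1)) g).symm
  rw [hsum, hsum, mul_sum, sum_div, ← nsmul_eq_mul, ← sum_const, ← sum_add_distrib]
  exact sum_le_sum fun c _ => hblock c

end IsotonicPairing

section OracleInequality

variable {n1 n2 : ℕ} {lse : (Fin n1 → Fin n2 → ℝ) → Fin n1 → Fin n2 → ℝ}

lemma frobSq_eq_sum (θ : Fin n1 → Fin n2 → ℝ) : frobSq θ = ∑ p : Fin n1 × Fin n2, θ p.1 p.2 ^ 2 :=
  (Fintype.sum_prod_type' fun i j => θ i j ^ 2).symm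

lemma IsLSE.frobSq_sub_le (h : IsLSE lse) {θ : Fin n1 → Fin n2 → ℝ} (hθ : Isotonic θ)
    (θ₀ ε : Fin n1 → Fin n2 → ℝ) :
    frobSq (lse (θ₀ + ε) - θ₀) ≤ frobSq (θ - θ₀) +
      2 * ∑ p : Fin n1 × Fin n2, ε p.1 p.2 * (lse (θ₀ + ε) p.1 p.2 - θ p.1 p.2) := by
  have hmin := (h (θ₀ + ε)).2 θ hθ
  simp only [frobSq_eq_sum, Pi.sub_apply, Pi.add_apply] at hmin ⊢
  rw [← sub_nonneg, ← Finset.sum_sub_distrib] at hmin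
  rw [Finset.mul_sum, ← Finset.sum_add_distrib, ← sub_nonneg, ← Finset.sum_sub_distrib]
  convert hmin using 2
  ring

lemma frobSq_sub_le_two_mul_add (θ θ₁ θ₂ : Fin n1 → Fin n2 → ℝ) :
    frobSq (θ₁ - θ₂) ≤ 2 * (frobSq (θ₁ - θ) + frobSq (θ₂ - θ)) := by
  simp only [frobSq_eq_sum, Pi.sub_apply, ← Finset.sum_add_distrib, Finset.mul_sum]
  gcongr with p
  linarith [sq_nonneg (θ₁ p.1 p.2 - θ p.1 p.2 + (θ₂ p.1 p.2 - θ p.1 p.2))]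

lemma IsLSE.frobSq_sub_le_of_monotone (h : IsLSE lse) {f : Fin n1 → ℝ} (hf : Monotone f) {k : ℕ}
    (hk : n1 < 2 ^ k) (θ₀ ε : Fin n1 → Fin n2 → ℝ) :
    frobSq (lse (θ₀ + ε) - θ₀) ≤ 3 * frobSq ((fun i _ => f i) - θ₀) +
      16 * (Finset.univ.image f).card * k ^ 4 * harmonic (n1 * n2) *
        intervalNorm (fun p : Fin n1 × Fin n2 => ε p.1 p.2) ^ 2 := by
  set u := lse (θ₀ + ε)
  set θ : Fin n1 → Fin n2 → ℝ := fun i _ => f i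
  have hbasic := h.frobSq_sub_le (θ := θ) (fun _ _ _ _ hij _ => hf hij) θ₀ ε
  have hsplit := frobSq_sub_le_two_mul_add θ₀ u θ
  have hmono (c : ℝ) : MonotoneOn (fun p : Fin n1 × Fin n2 => u p.1 p.2 - θ p.1 p.2)
      {p | f p.1 = c} := by
    rintro p rfl q (hq : f q.1 = f p.1) hpq
    simpa only [θ, hq, sub_le_sub_iff_right] using (h (θ₀ + ε)).1 hpq.1 hpq.2
  have hpair := two_mul_sum_mul_le_of_monotoneOn_fibers (fun p => ε p.1 p.2) hf
    (by rwa [Fintype.card_fin]) hmono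
  have hnorm : ∑ p : Fin n1 × Fin n2, (u p.1 p.2 - θ p.1 p.2) ^ 2 = frobSq (u - θ) :=
    (frobSq_eq_sum (u - θ)).symm
  rw [hnorm, Fintype.card_fin, Fintype.card_fin] at hpair
  linarith

end OracleInequality

section SubgaussianMaximum

open Finset
open scoped NNReal

lemma sq_le_two_mul_log_sq_add {x m : ℝ} (hx : 0 ≤ x) (hm : 1 ≤ m) :
    x ^ 2 ≤ 2 * Real.log m ^ 2 + 4 / m * Real.exp x := by
  have hlog : 0 ≤ Real.log m := Real.log_nonneg hm
  have hexp : 4 / m * Real.exp x = 4 * Real.exp (x - Real.log m) := by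
    rw [Real.exp_sub, Real.exp_log (by positivity)]
    ring
  rw [hexp]
  rcases le_total x (Real.log m) with h | h
  · nlinarith [Real.exp_pos (x - Real.log m)]
  · nlinarith [Real.quadratic_le_exp_of_nonneg (sub_nonneg.2 h), sq_nonneg (x - 2 * Real.log m)]

lemma mul_sq_iSup_abs_le {ι : Type*} [Fintype ι] [Nonempty ι] (x : ι → ℝ) {t : ℝ} (ht : 0 < t) :
    t ^ 2 * (⨆ i, |x i|) ^ 2 ≤ 2 * Real.log (Fintype.card ι) ^ 2 +
      4 / Fintype.card ι * ∑ i, (Real.exp (t * x i) + Real.exp (-t * x i)) := by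
  obtain ⟨i, hi⟩ := exists_eq_ciSup_of_finite (f := fun i => |x i|)
  have hexp : Real.exp (t * |x i|) ≤ ∑ i, (Real.exp (t * x i) + Real.exp (-t * x i)) := by
    refine le_trans ?_ (single_le_sum (fun i _ => by positivity) (mem_univ i))
    rcases abs_choice (x i) with h | h <;> rw [h]
    · exact le_add_of_nonneg_right (Real.exp_nonneg _)
    · rw [mul_neg, ← neg_mul]
      exact le_add_of_nonneg_left (Real.exp_nonneg _)
  rw [← hi, ← mul_pow]
  refine (sq_le_two_mul_log_sq_add (by positivity) ?_).trans (by gcongr)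
  exact_mod_cast Fintype.card_pos (α := ι)

variable {ι Ω : Type*} {mΩ : MeasurableSpace Ω} {μ : Measure Ω} {X : ι → Ω → ℝ} {c : ℝ≥0}

lemma integrable_sum_exp_add_exp_neg [Fintype ι] (hX : ∀ i, HasSubgaussianMGF (X i) c μ) (t : ℝ) :
    Integrable (fun ω => ∑ i, (Real.exp (t * X i ω) + Real.exp (-t * X i ω))) μ :=
  integrable_finsetSum _ fun i _ =>
    ((hX i).integrable_exp_mul t).add ((hX i).integrable_exp_mul (-t))

lemma integral_sum_exp_add_exp_neg_le [Fintype ι] (hX : ∀ i, HasSubgaussianMGF (X i) c μ) (t : ℝ) :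
    ∫ ω, ∑ i, (Real.exp (t * X i ω) + Real.exp (-t * X i ω)) ∂μ ≤
      2 * Fintype.card ι * Real.exp (c * t ^ 2 / 2) := by
  have hint (i) (t : ℝ) := (hX i).integrable_exp_mul t
  calc ∫ ω, ∑ i, (Real.exp (t * X i ω) + Real.exp (-t * X i ω)) ∂μ
      = ∑ i, ∫ ω, (Real.exp (t * X i ω) + Real.exp (-t * X i ω)) ∂μ :=
        integral_finsetSum _ fun i _ => (hint i t).add (hint i (-t))
    _ = ∑ i, (mgf (X i) μ t + mgf (X i) μ (-t)) :=
        sum_congr rfl fun i _ => integral_add (hint i t) (hint i (-t))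
    _ ≤ ∑ _i : ι, (Real.exp (c * t ^ 2 / 2) + Real.exp (c * t ^ 2 / 2)) := by
        gcongr with i
        · exact (hX i).mgf_le t
        · simpa using (hX i).mgf_le (-t)
    _ = 2 * Fintype.card ι * Real.exp (c * t ^ 2 / 2) := by
        rw [sum_const, card_univ, nsmul_eq_mul]
        ring

variable [Nonempty ι] [IsProbabilityMeasure μ]

lemma integrable_sq_iSup_abs [Finite ι] (hX : ∀ i, HasSubgaussianMGF (X i) c μ) :
    Integrable (fun ω => (⨆ i, |X i ω|) ^ 2) μ := by
  have := Fintype.ofFinite ι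
  refine ((integrable_const (2 * Real.log (Fintype.card ι) ^ 2)).add
    ((integrable_sum_exp_add_exp_neg hX 1).const_mul (4 / Fintype.card ι : ℝ))).mono' ?_
    (.of_forall fun ω => ?_)
  · exact ((AEMeasurable.iSup fun i => (hX i).aemeasurable.abs).pow_const 2).aestronglyMeasurable
  · rw [Real.norm_of_nonneg (sq_nonneg _)]
    simpa using mul_sq_iSup_abs_le (fun i => X i ω) one_pos

lemma integral_sq_iSup_abs_le [Fintype ι] (hc : 0 < c)
    (hX : ∀ i, HasSubgaussianMGF (X i) c μ) :
    ∫ ω, (⨆ i, |X i ω|) ^ 2 ∂μ ≤ c * (2 * Real.log (Fintype.card ι) ^ 2 + 16) := by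
  have hexp : Real.exp (1 / 2) ≤ 2 :=
    (Real.le_log_iff_exp_le two_pos).1 (by linarith [Real.log_two_gt_d9])
  have ht : (√c)⁻¹ ^ 2 = (c : ℝ)⁻¹ := by rw [inv_pow, Real.sq_sqrt c.coe_nonneg]
  have hc' : (0 : ℝ) < c := hc
  have hint := integrable_sum_exp_add_exp_neg hX (√c)⁻¹
  have hle := integral_sum_exp_add_exp_neg_le hX (√c)⁻¹
  rw [← inv_mul_le_iff₀ hc', ← integral_const_mul]
  calc ∫ ω, (c : ℝ)⁻¹ * (⨆ i, |X i ω|) ^ 2 ∂μ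
      ≤ ∫ ω, (2 * Real.log (Fintype.card ι) ^ 2 + 4 / Fintype.card ι *
          ∑ i, (Real.exp ((√c)⁻¹ * X i ω) + Real.exp (-(√c)⁻¹ * X i ω))) ∂μ := by
        refine integral_mono ((integrable_sq_iSup_abs hX).const_mul _)
          ((integrable_const _).add (hint.const_mul _)) fun ω => ?_
        simpa only [ht] using
          mul_sq_iSup_abs_le (fun i => X i ω) (inv_pos.2 (Real.sqrt_pos.2 hc'))
    _ = 2 * Real.log (Fintype.card ι) ^ 2 + 4 / Fintype.card ι *
          ∫ ω, ∑ i, (Real.exp ((√c)⁻¹ * X i ω) + Real.exp (-(√c)⁻¹ * X i ω)) ∂μ := by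
        rw [integral_add (integrable_const _) (hint.const_mul _), integral_const, probReal_univ,
          one_smul, integral_const_mul]
    _ ≤ 2 * Real.log (Fintype.card ι) ^ 2 + 4 / Fintype.card ι * (2 * Fintype.card ι * 2) := by
        gcongr
        refine hle.trans ?_
        rw [ht, mul_inv_cancel₀ hc'.ne']
        gcongr
    _ = 2 * Real.log (Fintype.card ι) ^ 2 + 16 := by
        field_simp
        ring

end SubgaussianMaximum

section GaussianNoise

open Finset
open scoped NNReal

lemma hasSubgaussianMGF_id_gaussianReal (v : ℝ≥0) : HasSubgaussianMGF id v (gaussianReal 0 v) where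
  integrable_exp_mul := integrable_exp_mul_gaussianReal
  mgf_le t := by simp [mgf_id_gaussianReal]

lemma hasSubgaussianMGF_mono {Ω : Type*} {mΩ : MeasurableSpace Ω} {μ : Measure Ω} {X : Ω → ℝ}
    {c d : ℝ≥0} (h : HasSubgaussianMGF X c μ) (hcd : c ≤ d) : HasSubgaussianMGF X d μ where
  integrable_exp_mul := h.integrable_exp_mul
  mgf_le t := (h.mgf_le t).trans (by gcongr)

lemma hasSubgaussianMGF_sum_pi {ι : Type*} [Fintype ι] {Ω : ι → Type*}
    {mΩ : ∀ i, MeasurableSpace (Ω i)} {μ : ∀ i, Measure (Ω i)} [∀ i, IsProbabilityMeasure (μ i)]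
    {X : ∀ i, Ω i → ℝ} {c : ι → ℝ≥0} (hX : ∀ i, HasSubgaussianMGF (X i) (c i) (μ i))
    (s : Finset ι) :
    HasSubgaussianMGF (fun ω => ∑ i ∈ s, X i (ω i)) (∑ i ∈ s, c i) (Measure.pi μ) := by
  refine HasSubgaussianMGF.sum_of_iIndepFun
    (iIndepFun_pi fun i => (hX i).aemeasurable) fun i _ => ?_
  have heval := measurePreserving_eval μ i
  exact HasSubgaussianMGF.of_map heval.aemeasurable (heval.map_eq.symm ▸ hX i)

variable {n1 n2 : ℕ}

lemma noiseMeasure_eq_pi (n1 n2 : ℕ) (σ : ℝ) :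
    noiseMeasure n1 n2 σ = Measure.pi fun _ => Measure.pi fun _ =>
      gaussianReal 0 (σ ^ 2).toNNReal := by
  rw [Real.toNNReal_of_nonneg (sq_nonneg σ)]
  rfl

instance isProbabilityMeasure_noiseMeasure (n1 n2 : ℕ) (σ : ℝ) :
    IsProbabilityMeasure (noiseMeasure n1 n2 σ) := by
  rw [noiseMeasure_eq_pi]
  infer_instance

lemma hasSubgaussianMGF_sum_rectangle_noiseMeasure (σ : ℝ) (s : Finset (Fin n1))
    (t : Finset (Fin n2)) :
    HasSubgaussianMGF (fun ε => ∑ p ∈ s ×ˢ t, ε p.1 p.2) (#(s ×ˢ t) * (σ ^ 2).toNNReal)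
      (noiseMeasure n1 n2 σ) := by
  have h := hasSubgaussianMGF_sum_pi (fun _ : Fin n1 => hasSubgaussianMGF_sum_pi
    (fun _ : Fin n2 => hasSubgaussianMGF_id_gaussianReal (σ ^ 2).toNNReal) t) s
  rw [noiseMeasure_eq_pi]
  simpa only [sum_product, sum_const, nsmul_eq_mul, id, card_product, Nat.cast_mul,
    mul_assoc] using h

lemma hasSubgaussianMGF_sum_Icc_div_sqrt_card (σ : ℝ) (a b : Fin n1 × Fin n2) :
    HasSubgaussianMGF (fun ε => (∑ p ∈ Icc a b, ε p.1 p.2) / √(#(Icc a b)))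
      (σ ^ 2).toNNReal (noiseMeasure n1 n2 σ) := by
  have hsum := hasSubgaussianMGF_sum_rectangle_noiseMeasure σ (Icc a.1 b.1) (Icc a.2 b.2)
  rw [← Icc_prod_def] at hsum
  simp only [div_eq_inv_mul]
  refine hasSubgaussianMGF_mono (hsum.const_mul (√(#(Icc a b)))⁻¹) ?_
  rw [← NNReal.coe_le_coe]
  change (√(#(Icc a b)))⁻¹ ^ 2 * (#(Icc a b) * ((σ ^ 2).toNNReal : ℝ)) ≤ (σ ^ 2).toNNReal
  rw [inv_pow, Real.sq_sqrt (Nat.cast_nonneg _), ← mul_assoc]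
  exact mul_le_of_le_one_left NNReal.zero_le_coe inv_mul_le_one

lemma intervalNorm_eq_iSup_abs_div (e : Fin n1 × Fin n2 → ℝ) :
    intervalNorm e = ⨆ p : (Fin n1 × Fin n2) × (Fin n1 × Fin n2),
      |(∑ x ∈ Icc p.1 p.2, e x) / √(#(Icc p.1 p.2))| := by
  simp only [intervalNorm, abs_div, abs_of_nonneg (Real.sqrt_nonneg _)]

variable [NeZero n1] [NeZero n2]

lemma integrable_sq_intervalNorm (σ : ℝ) :
    Integrable (fun ε => intervalNorm (fun p : Fin n1 × Fin n2 => ε p.1 p.2) ^ 2)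
      (noiseMeasure n1 n2 σ) := by
  simp only [intervalNorm_eq_iSup_abs_div]
  exact integrable_sq_iSup_abs fun p => hasSubgaussianMGF_sum_Icc_div_sqrt_card σ p.1 p.2

lemma integral_sq_intervalNorm_le {σ : ℝ} (hσ : σ ≠ 0) :
    ∫ ε, intervalNorm (fun p : Fin n1 × Fin n2 => ε p.1 p.2) ^ 2 ∂noiseMeasure n1 n2 σ ≤
      σ ^ 2 * (8 * Real.log (n1 * n2) ^ 2 + 16) := by
  have h := integral_sq_iSup_abs_le (Real.toNNReal_pos.2 (sq_pos_of_ne_zero hσ))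
    fun p : (Fin n1 × Fin n2) × (Fin n1 × Fin n2) =>
      hasSubgaussianMGF_sum_Icc_div_sqrt_card σ p.1 p.2
  have hlog : Real.log (Fintype.card ((Fin n1 × Fin n2) × (Fin n1 × Fin n2))) =
      2 * Real.log (n1 * n2) := by
    rw [Fintype.card_prod, Fintype.card_prod, Fintype.card_fin, Fintype.card_fin, ← sq,
      Nat.cast_pow, Nat.cast_mul, Real.log_pow, Nat.cast_ofNat]
  simp only [← intervalNorm_eq_iSup_abs_div] at h
  rw [Real.coe_toNNReal _ (sq_nonneg σ), hlog] at h
  linarith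

end GaussianNoise

section RiskBound

variable {n1 n2 : ℕ} {σ : ℝ} {lse : (Fin n1 → Fin n2 → ℝ) → Fin n1 → Fin n2 → ℝ}

lemma frobSq_nonneg (θ : Fin n1 → Fin n2 → ℝ) : 0 ≤ frobSq θ := by
  rw [frobSq_eq_sum]
  positivity

lemma one_le_log_of_three_le {n : ℕ} (hn : 3 ≤ n) : 1 ≤ Real.log n := by
  have hn' : (3 : ℝ) ≤ n := mod_cast hn
  exact (Real.le_log_iff_exp_le (by linarith)).2 (by linarith [Real.exp_one_lt_d9])

lemma natLog_two_add_one_le_four_mul_log {n : ℕ} (hn : 3 ≤ n) :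
    (Nat.log 2 n + 1 : ℝ) ≤ 4 * Real.log n := by
  have hlog := one_le_log_of_three_le hn
  have hpow : ((2 ^ Nat.log 2 n : ℕ) : ℝ) ≤ n := mod_cast Nat.pow_log_le_self 2 (by omega)
  have h := Real.log_le_log (by positivity) hpow
  rw [Nat.cast_pow, Real.log_pow, Nat.cast_ofNat] at h
  nlinarith [Real.log_two_gt_d9, (Nat.cast_nonneg (Nat.log 2 n) : (0 : ℝ) ≤ _)]

lemma harmonic_nonneg (n : ℕ) : 0 ≤ harmonic n :=
  harmonic_zero ▸ harmonic_mono n.zero_le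

lemma IsLSE.integral_frobSq_sub_le [NeZero n1] [NeZero n2] (h : IsLSE lse) {f : Fin n1 → ℝ}
    (hf : Monotone f) {k : ℕ} (hk : n1 < 2 ^ k) (hσ : σ ≠ 0) (θ₀ : Fin n1 → Fin n2 → ℝ) :
    ∫ ε, frobSq (lse (θ₀ + ε) - θ₀) ∂noiseMeasure n1 n2 σ ≤
      3 * frobSq ((fun i _ => f i) - θ₀) + 16 * (Finset.univ.image f).card * k ^ 4 *
        harmonic (n1 * n2) * (σ ^ 2 * (8 * Real.log (n1 * n2) ^ 2 + 16)) := by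
  have hint := (integrable_sq_intervalNorm (n1 := n1) (n2 := n2) σ).const_mul
    (16 * (Finset.univ.image f).card * k ^ 4 * harmonic (n1 * n2))
  have hharm : (0 : ℝ) ≤ harmonic (n1 * n2) := mod_cast harmonic_nonneg (n1 * n2)
  refine (integral_mono_of_nonneg (.of_forall fun ε => frobSq_nonneg _)
    ((integrable_const _).add hint)
    (.of_forall fun ε => h.frobSq_sub_le_of_monotone hf hk θ₀ ε)).trans ?_
  simp only [Pi.add_apply]
  rw [integral_add (integrable_const _) hint, integral_const, probReal_univ, one_smul,
    integral_const_mul]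
  gcongr
  exact integral_sq_intervalNorm_le hσ

lemma IsLSE.risk_le (h : IsLSE lse) {f : Fin n1 → ℝ} (hf : Monotone f) (hn : 3 ≤ n1 * n2)
    (hσ : σ ≠ 0) (θ₀ : Fin n1 → Fin n2 → ℝ) :
    risk σ θ₀ lse ≤ (3 * frobSq ((fun i _ => f i) - θ₀) +
      196608 * (Finset.univ.image f).card * σ ^ 2 * Real.log (n1 * n2) ^ 7) / (n1 * n2) := by
  have hn0 : n1 ≠ 0 ∧ n2 ≠ 0 := by rw [← mul_ne_zero_iff]; omega
  have : NeZero n1 := ⟨hn0.1⟩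
  have : NeZero n2 := ⟨hn0.2⟩
  set L := Real.log (n1 * n2) with hL
  have hL1 : 1 ≤ L := by simpa [hL] using one_le_log_of_three_le hn
  have hk : ((Nat.log 2 (n1 * n2) + 1 : ℕ) : ℝ) ≤ 4 * L := by
    simpa [hL] using natLog_two_add_one_le_four_mul_log hn
  have hharm_nonneg : (0 : ℝ) ≤ harmonic (n1 * n2) := mod_cast harmonic_nonneg (n1 * n2)
  have hharm : (harmonic (n1 * n2) : ℝ) ≤ 2 * L := by
    have := harmonic_le_one_add_log (n1 * n2)
    rw [Nat.cast_mul] at this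
    linarith
  have hlt : n1 < 2 ^ (Nat.log 2 (n1 * n2) + 1) :=
    (Nat.le_mul_of_pos_right n1 (NeZero.pos n2)).trans_lt (Nat.lt_pow_succ_log_self one_lt_two _)
  have hnoise : 8 * L ^ 2 + 16 ≤ 24 * L ^ 2 := by nlinarith
  unfold risk
  gcongr
  calc ∫ ε, frobSq (lse (θ₀ + ε) - θ₀) ∂noiseMeasure n1 n2 σ
      ≤ 3 * frobSq ((fun i _ => f i) - θ₀) + 16 * (Finset.univ.image f).card * (4 * L) ^ 4 *
          (2 * L) * (σ ^ 2 * (24 * L ^ 2)) := by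
        refine (h.integral_frobSq_sub_le hf hlt hσ θ₀).trans ?_
        gcongr
    _ = 3 * frobSq ((fun i _ => f i) - θ₀) +
          196608 * (Finset.univ.image f).card * σ ^ 2 * L ^ 7 := by ring

end RiskBound

section Quantization

lemma exists_monotone_abs_sub_le {ι : Type*} [Preorder ι] [Fintype ι] [Nonempty ι] {f : ι → ℝ}
    (hf : Monotone f) {a b : ℝ} (ha : ∀ i, a ≤ f i) (hb : ∀ i, f i ≤ b) {δ : ℝ} (hδ : 0 < δ) :
    ∃ g : ι → ℝ, Monotone g ∧ (∀ i, |g i - f i| ≤ δ) ∧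
      ((Finset.univ.image g).card : ℝ) ≤ (b - a) / δ + 1 := by
  refine ⟨fun i => a + δ * ⌊(f i - a) / δ⌋₊, fun i j hij => ?_, fun i => ?_, ?_⟩
  · have := hf hij
    dsimp only
    gcongr
  · have hnonneg : 0 ≤ (f i - a) / δ := div_nonneg (sub_nonneg.2 (ha i)) hδ.le
    have hle := (le_div_iff₀ hδ).1 (Nat.floor_le hnonneg)
    have hlt := (div_lt_iff₀ hδ).1 (Nat.lt_floor_add_one ((f i - a) / δ))
    rw [abs_le]
    constructor <;> linarith
  · have hsub : Finset.univ.image (fun i => a + δ * (⌊(f i - a) / δ⌋₊ : ℝ)) ⊆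
        (Finset.range (⌊(b - a) / δ⌋₊ + 1)).image fun m : ℕ => a + δ * (m : ℝ) := by
      refine Finset.image_subset_iff.2 fun i _ => Finset.mem_image_of_mem
        (fun m : ℕ => a + δ * (m : ℝ)) (Finset.mem_range_succ_iff.2 ?_)
      have := hb i
      gcongr
    have hcard := (Finset.card_le_card hsub).trans Finset.card_image_le
    rw [Finset.card_range] at hcard
    have hab : a ≤ b := (ha (Classical.arbitrary ι)).trans (hb _)
    calc ((Finset.univ.image _).card : ℝ) ≤ ((⌊(b - a) / δ⌋₊ + 1 : ℕ) : ℝ) := mod_cast hcard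
      _ ≤ (b - a) / δ + 1 := by
        rw [Nat.cast_add_one]
        gcongr
        exact Nat.floor_le (div_nonneg (sub_nonneg.2 hab) hδ.le)

end Quantization

section Rate

variable {n1 n2 : ℕ}

lemma frobSq_le_of_abs_le {θ : Fin n1 → Fin n2 → ℝ} {δ : ℝ} (h : ∀ i j, |θ i j| ≤ δ) :
    frobSq θ ≤ n1 * n2 * δ ^ 2 := by
  rw [frobSq_eq_sum]
  refine (Finset.sum_le_card_nsmul _ _ (δ ^ 2) fun p _ => ?_).trans_eq ?_
  · exact sq_le_sq' (abs_le.1 (h _ _)).1 (abs_le.1 (h _ _)).2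
  · rw [Finset.card_univ, Fintype.card_prod, Fintype.card_fin, Fintype.card_fin, nsmul_eq_mul,
      Nat.cast_mul]

lemma IsLSE.risk_le_of_mesh {lse : (Fin n1 → Fin n2 → ℝ) → Fin n1 → Fin n2 → ℝ} (h : IsLSE lse)
    {f : Fin n1 → ℝ} (hf : Monotone f) (hn : 3 ≤ n1 * n2) {a b : ℝ} (ha : ∀ i, a ≤ f i)
    (hb : ∀ i, f i ≤ b) {σ δ : ℝ} (hσ : σ ≠ 0) (hδ : 0 < δ) :
    risk σ (fun i _ => f i) lse ≤ 3 * δ ^ 2 +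
      196608 * (((b - a) / δ + 1) * (σ ^ 2 / (n1 * n2))) * Real.log (n1 * n2) ^ 7 := by
  have hn1 : 0 < n1 := Nat.pos_of_mul_pos_right (by omega : 0 < n1 * n2)
  have : Nonempty (Fin n1) := ⟨⟨0, hn1⟩⟩
  obtain ⟨g, hg, hgf, hcard⟩ := exists_monotone_abs_sub_le hf ha hb hδ
  have hfrob : frobSq ((fun i _ => g i) - fun (i : Fin n1) (_ : Fin n2) => f i) ≤
      n1 * n2 * δ ^ 2 := frobSq_le_of_abs_le fun i _ => hgf i
  have hn0 : (0 : ℝ) < n1 * n2 := by exact_mod_cast (by omega : 0 < n1 * n2)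
  have hlog : 0 ≤ Real.log (n1 * n2) := by exact_mod_cast Real.log_natCast_nonneg (n1 * n2)
  calc risk σ (fun i _ => f i) lse
      ≤ (3 * (n1 * n2 * δ ^ 2) + 196608 * ((b - a) / δ + 1) * σ ^ 2 *
          Real.log (n1 * n2) ^ 7) / (n1 * n2) := by
        refine (h.risk_le hg hn hσ _).trans ?_
        gcongr
    _ = _ := by
        rw [add_div, mul_left_comm, mul_div_cancel_left₀ _ hn0.ne']
        ring

lemma exists_mesh_balancing {s V : ℝ} (hs : 0 < s) (hV : 0 < V) (hsV : s ≤ V ^ 2) :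
    ∃ δ, 0 < δ ∧ δ ^ 2 = (s * V) ^ (2 / 3 : ℝ) ∧ (V / δ + 1) * s ≤ 2 * δ ^ 2 := by
  have hsV0 : 0 ≤ s * V := by positivity
  obtain ⟨δ, hδ⟩ : ∃ δ, δ = (s * V) ^ (1 / 3 : ℝ) := ⟨_, rfl⟩
  have hδ0 : 0 < δ := by rw [hδ]; positivity
  have hsq : δ ^ 2 = (s * V) ^ (2 / 3 : ℝ) := by
    rw [hδ, ← Real.rpow_mul_natCast hsV0]
    norm_num
  have hcube : δ ^ 3 = s * V := by
    rw [hδ, ← Real.rpow_mul_natCast hsV0]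
    norm_num
  have hδV : δ ≤ V := le_of_pow_le_pow_left₀ three_ne_zero hV.le (by rw [hcube]; nlinarith)
  refine ⟨δ, hδ0, hsq, ?_⟩
  calc (V / δ + 1) * s ≤ (V / δ + V / δ) * s := by
        gcongr
        exact (one_le_div hδ0).2 hδV
    _ = 2 * (s * V / δ) := by ring
    _ = 2 * δ ^ 2 := by
        rw [← hcube]
        field_simp

lemma IsLSE.risk_le_rpow {lse : (Fin n1 → Fin n2 → ℝ) → Fin n1 → Fin n2 → ℝ} (h : IsLSE lse)
    {f : Fin n1 → ℝ} (hf : Monotone f) (hn : 3 ≤ n1 * n2) {a b : ℝ} (ha : ∀ i, a ≤ f i)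
    (hb : ∀ i, f i ≤ b) (hab : a < b) {σ : ℝ} (hσ : σ ≠ 0)
    (hsnr : σ ^ 2 / (n1 * n2) ≤ (b - a) ^ 2) :
    risk σ (fun i _ => f i) lse ≤
      393219 * Real.log (n1 * n2) ^ 8 * (σ ^ 2 * (b - a) / (n1 * n2)) ^ (2 / 3 : ℝ) := by
  have hn0 : (0 : ℝ) < n1 * n2 := by exact_mod_cast (by omega : 0 < n1 * n2)
  set L := Real.log (n1 * n2) with hLdef
  have hL : 1 ≤ L := by simpa [hLdef] using one_le_log_of_three_le hn
  obtain ⟨δ, hδ, hδsq, hbalance⟩ := exists_mesh_balancing (by positivity) (sub_pos.2 hab) hsnr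
  rw [mul_div_right_comm, ← hδsq]
  calc risk σ (fun i _ => f i) lse
      ≤ 3 * δ ^ 2 + 196608 * (2 * δ ^ 2) * L ^ 7 :=
        (h.risk_le_of_mesh hf hn ha hb hσ hδ).trans (by gcongr)
    _ ≤ 3 * δ ^ 2 * L ^ 8 + 196608 * (2 * δ ^ 2) * L ^ 8 := by
        refine add_le_add (le_mul_of_one_le_right (by positivity) (one_le_pow₀ hL)) ?_
        gcongr
        norm_num
    _ = 393219 * L ^ 8 * δ ^ 2 := by ring

lemma Isotonic.sqrt_Dmat {θ : Fin n1 → Fin n2 → ℝ} (hθ : Isotonic θ) (h1 : 0 < n1) (h2 : 0 < n2) :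
    √(Dmat h1 h2 θ) = θ ⟨n1 - 1, Nat.sub_lt h1 one_pos⟩ ⟨n2 - 1, Nat.sub_lt h2 one_pos⟩ -
      θ ⟨0, h1⟩ ⟨0, h2⟩ :=
  Real.sqrt_sq (sub_nonneg.2 (hθ (Nat.zero_le _) (Nat.zero_le _)))

end Rate

/-- **Theorem 4, inequality (vara2) (variable adaptation, worst-case form).** There is
a universal constant `C > 0` such that if the isotonic matrix `θ*` is constant along
each row, i.e. `θ*_{ij} = θ*_i` for a nondecreasing vector `θ* ∈ C_{n1}`, and if
`n D(θ*) ≥ 2σ²`, then `R(θ*, θ̂) ≤ C (log n)⁸ (σ² sqrt(D(θ*)) / n)^{2/3}` with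
`n = n1 n2`. -/
theorem isotonic_lse_variable_adaptation_rate :
    ∃ C : ℝ, 0 < C ∧
      ∀ (n1 n2 : ℕ) (h1 : 1 < n1) (h2 : 1 < n2), ∀ σ : ℝ, 0 < σ →
        ∀ θstar : Fin n1 → Fin n2 → ℝ, Isotonic θstar →
          ∀ θstarVec : Fin n1 → ℝ, Monotone θstarVec →
            (∀ i j, θstar i j = θstarVec i) →
            2 * σ ^ 2 ≤ (n1 * n2 : ℝ) * Dmat (by omega) (by omega) θstar →
            ∀ lse, IsLSE lse →
              risk σ θstar lse ≤
                C * Real.log (n1 * n2) ^ 8 *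
                  (σ ^ 2 * Real.sqrt (Dmat (by omega) (by omega) θstar) / (n1 * n2)) ^
                    ((2 : ℝ) / 3) := by
  refine ⟨393219, by norm_num, fun n1 n2 h1 h2 σ hσ θ hθ f hf hθf hD lse hlse => ?_⟩
  have hn : 4 ≤ n1 * n2 := Nat.mul_le_mul h1 h2
  have hn0 : (0 : ℝ) < n1 * n2 := by positivity
  have hD0 : 0 < Dmat (by omega) (by omega) θ := pos_of_mul_pos_right (by nlinarith) hn0.le
  have hrange := hθ.sqrt_Dmat (by omega) (by omega)
  have hsnr : σ ^ 2 / (n1 * n2) ≤ √(Dmat (by omega) (by omega) θ) ^ 2 := by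
    rw [Real.sq_sqrt hD0.le, div_le_iff₀' hn0]
    nlinarith
  have hlt := sub_pos.1 (hrange ▸ Real.sqrt_pos.2 hD0)
  obtain rfl : θ = fun i _ => f i := by
    ext i j
    exact hθf i j
  rw [hrange] at hsnr ⊢
  have hmax (i : Fin n1) : i ≤ ⟨n1 - 1, by omega⟩ := Nat.le_sub_one_of_lt i.2
  exact hlse.risk_le_rpow hf (by omega) (fun i => hf (Nat.zero_le i)) (fun i => hf (hmax i)) hlt
    hσ.ne' hsnr
end
end

section
/- There exists a universal constant C > 0 such that for every ε > 0 and all integers n1, n2 > 1, the ε-covering number of the Frobenius-norm unit ball of isotonic matrices satisfies log N(ε, B(0,1)) ≤ C · (log n1)² (log n2)² / ε² · [ log( 4 sqrt(log n1 · log n2) / ε ) ]². -/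
open MeasureTheory ProbabilityTheory

noncomputable section

/-- The `ε`-covering number of `F ⊆ ℝ^{n1×n2}` in the Frobenius metric: the smallest
cardinality of a finite set `S` such that every point of `F` is within Frobenius
distance `ε` of some point of `S`. -/
def coverNum {n1 n2 : ℕ} (ε : ℝ) (F : Set (Fin n1 → Fin n2 → ℝ)) : ℕ :=
  sInf {k | ∃ S : Finset (Fin n1 → Fin n2 → ℝ), S.card = k ∧
    ∀ θ ∈ F, ∃ s ∈ S, frobSq (θ - s) ≤ ε ^ 2}

/-!
Splitting a matrix into positive and negative parts and reversing indices reduces the problem to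
nonnegative antitone functions `f` on the quadrant. Antitonicity and a unit norm force
`(p + 1) * (q + 1) * f (p, q) ^ 2 ≤ 1`, so on each of the about `log n1 * log n2` dyadic blocks `f`
becomes, after scaling by the square root of the area, an antitone function with values in `[0, 1]`.

Such a function is encoded by its values at the corners of `2 ^ s × 2 ^ s` grids, `s ≤ S`, rounded
to multiples of `2 ^ s / K`. The level sets of the rounded values are bounded by lattice paths, so
every scale costs `O(K)` bits. Two functions with the same code differ by at most `2 ^ s / K` at the
corners of scale `s`, and passing from scale `s` to `s + 1` changes their difference by
`O(area / 2 ^ s)` in `ℓ¹`; the squared `ℓ²` distance thus grows by `O(area / K)` at each scale, and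
equals `O(area * (S / K + 2 ^ (-S)))` in the end. Over all blocks, `2 ^ S ~ log n1 * log n2 / ε ^ 2`
and `K ~ log n1 * log n2 * S / ε ^ 2` give radius `ε`.
-/

open Finset

section Coding

variable {X Y : Type*} {P : Set X} {R : X → X → Prop} {N : ℕ}

/-- `P` splits into at most `N` classes, any two members of one class being related by `R`. With
`R x y` saying that `x` and `y` are close, this bounds a covering number of `P`; unlike covers,
codings combine by pairing and pull back along arbitrary maps. -/
def HasCoding (P : Set X) (R : X → X → Prop) (N : ℕ) : Prop :=
  ∃ code : X → Fin N, ∀ ⦃x⦄, x ∈ P → ∀ ⦃y⦄, y ∈ P → code x = code y → R x y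

namespace HasCoding

lemma of_fintype {T : Type*} [Fintype T] (code : X → T)
    (h : ∀ ⦃x⦄, x ∈ P → ∀ ⦃y⦄, y ∈ P → code x = code y → R x y) :
    HasCoding P R (Fintype.card T) :=
  ⟨fun x => Fintype.equivFin T (code x), fun _ hx _ hy hxy =>
    h hx hy ((Fintype.equivFin T).injective hxy)⟩

lemma mono (h : HasCoding P R N) {M : ℕ} (hNM : N ≤ M) : HasCoding P R M := by
  obtain ⟨code, hcode⟩ := h
  exact ⟨fun x => Fin.castLE hNM (code x), fun _ hx _ hy hxy =>
    hcode hx hy (Fin.castLE_injective hNM hxy)⟩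

lemma imp (h : HasCoding P R N) {R' : X → X → Prop}
    (hR : ∀ ⦃x⦄, x ∈ P → ∀ ⦃y⦄, y ∈ P → R x y → R' x y) : HasCoding P R' N := by
  obtain ⟨code, hcode⟩ := h
  exact ⟨code, fun _ hx _ hy hxy => hR hx hy (hcode hx hy hxy)⟩

lemma comap (h : HasCoding P R N) {φ : Y → X} {Q : Set Y} (hφ : Set.MapsTo φ Q P) :
    HasCoding Q (fun x y => R (φ x) (φ y)) N := by
  obtain ⟨code, hcode⟩ := h
  exact ⟨code ∘ φ, fun _ hx _ hy hxy => hcode (hφ hx) (hφ hy) hxy⟩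

lemma pi {ι : Type*} [Fintype ι] {R : ι → X → X → Prop} {N : ι → ℕ}
    (h : ∀ i, HasCoding P (R i) (N i)) : HasCoding P (fun x y => ∀ i, R i x y) (∏ i, N i) := by
  classical
  choose code hcode using h
  simpa only [Fintype.card_pi, Fintype.card_fin] using
    of_fintype (fun x i => code i x) fun _ hx _ hy hxy i => hcode i hx hy (congrFun hxy i)

lemma and {R' : X → X → Prop} {M : ℕ} (h : HasCoding P R N) (h' : HasCoding P R' M) :
    HasCoding P (fun x y => R x y ∧ R' x y) (N * M) := by
  obtain ⟨code, hcode⟩ := h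
  obtain ⟨code', hcode'⟩ := h'
  simpa only [Fintype.card_prod, Fintype.card_fin] using
    of_fintype (fun x => (code x, code' x)) fun _ hx _ hy hxy =>
      ⟨hcode hx hy (Prod.ext_iff.1 hxy).1, hcode' hx hy (Prod.ext_iff.1 hxy).2⟩

lemma exists_finset (h : HasCoding P R N) :
    ∃ H : Finset X, #H ≤ N ∧ ∀ x ∈ P, ∃ y ∈ H, R x y := by
  obtain ⟨code, hcode⟩ := h
  obtain ⟨H, hHP, hinj, himage⟩ := (Set.surjOn_image code P).exists_subset_injOn_image_eq
  lift H to Finset X using Set.Finite.of_finite_image (Set.toFinite _) hinj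
  refine ⟨H, ?_, fun x hx => ?_⟩
  · simpa only [card_fin] using
      card_le_card_of_injOn (t := univ) code (fun _ _ => mem_univ _) hinj
  · obtain ⟨y, hy, hyx⟩ : code x ∈ code '' H := himage ▸ Set.mem_image_of_mem code hx
    exact ⟨y, hy, hcode hx (hHP hy) hyx.symm⟩

end HasCoding

end Coding

section LevelSets

/-- The least `y` with `Q (x, y) ≤ j`, capped at `n`: for antitone `Q`, the height of the column
over `x` in the superlevel set `{z | j < Q z}` cut off at height `n`. -/
def columnHeight (n j : ℕ) (Q : ℕ × ℕ → ℕ) (x : ℕ) : ℕ :=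
  Nat.find (p := fun y => n ≤ y ∨ Q (x, y) ≤ j) ⟨n, .inl le_rfl⟩

variable {Q : ℕ × ℕ → ℕ}

lemma columnHeight_le (n j : ℕ) (Q : ℕ × ℕ → ℕ) (x : ℕ) : columnHeight n j Q x ≤ n :=
  Nat.find_min' _ (.inl le_rfl)

lemma antitone_columnHeight (hQ : Antitone Q) (n j : ℕ) : Antitone (columnHeight n j Q) :=
  fun _ _ hx => Nat.find_mono fun y => Or.imp_right (hQ (Prod.mk_le_mk.2 ⟨hx, le_refl y⟩)).trans

lemma lt_columnHeight_iff (hQ : Antitone Q) {n j x y : ℕ} (hy : y < n) :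
    y < columnHeight n j Q x ↔ j < Q (x, y) := by
  simp only [columnHeight, Nat.lt_find_iff, not_or, not_le]
  exact ⟨fun h => (h y le_rfl).2,
    fun h z hz => ⟨hz.trans_lt hy, h.trans_le (hQ ⟨le_rfl, hz⟩)⟩⟩

/-- The graph of `h` sheared so that, for antitone `h`, it becomes strictly increasing: the
positions of the horizontal steps in the lattice path with heights `h`. -/
def latticePath (m n : ℕ) (h : ℕ → ℕ) (x : Fin m) : Fin (m + n) := ⟨x + (n - h x), by omega⟩

lemma strictMono_latticePath (m n : ℕ) {h : ℕ → ℕ} (hh : Antitone h) :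
    StrictMono (latticePath m n h) := fun x y (hxy : (x : ℕ) < y) => by
  have := hh hxy.le
  simp only [latticePath, Fin.mk_lt_mk]
  omega

lemma hasCoding_antitone_nat (m n : ℕ) :
    HasCoding {h : ℕ → ℕ | Antitone h ∧ ∀ x, h x ≤ n} (fun g h => ∀ x < m, g x = h x)
      (2 ^ (m + n)) := by
  have hcard : Fintype.card (Set (Fin (m + n))) = 2 ^ (m + n) := by
    rw [Fintype.card_set, Fintype.card_fin]
  rw [← hcard]
  refine .of_fintype (fun h => Set.range (latticePath m n h)) ?_
  rintro g ⟨hg, hgn⟩ h ⟨hh, hhn⟩ hrange x hx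
  have hpath := ((strictMono_latticePath m n hg).range_inj (strictMono_latticePath m n hh)).1 hrange
  have hpath_x := congrArg Fin.val (congrFun hpath ⟨x, hx⟩)
  have := hgn x
  have := hhn x
  simp only [latticePath] at hpath_x
  omega

lemma hasCoding_antitone_grid (m n k : ℕ) :
    HasCoding {Q : ℕ × ℕ → ℕ | Antitone Q ∧ ∀ z, Q z ≤ k}
      (fun Q Q' => ∀ z : ℕ × ℕ, z.1 < m → z.2 < n → Q z = Q' z) (2 ^ ((m + n) * k)) := by
  have hcoding := HasCoding.pi fun j : Fin k => (hasCoding_antitone_nat m n).comap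
    (φ := columnHeight n j) (Q := {Q | Antitone Q ∧ ∀ z, Q z ≤ k})
    fun Q hQ => ⟨antitone_columnHeight hQ.1 n j, columnHeight_le n j Q⟩
  rw [prod_const, card_fin, ← pow_mul] at hcoding
  refine hcoding.imp ?_
  rintro Q ⟨hQ, hQk⟩ Q' ⟨hQ', hQk'⟩ hheight ⟨x, y⟩ hx hy
  have hlevel : ∀ j < k, j < Q (x, y) ↔ j < Q' (x, y) := fun j hj => by
    rw [← lt_columnHeight_iff hQ hy, ← lt_columnHeight_iff hQ' hy, hheight ⟨j, hj⟩ x hx]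
  exact eq_of_forall_lt_iff fun j =>
    ⟨fun hj => (hlevel j (hj.trans_le (hQk _))).1 hj,
      fun hj => (hlevel j (hj.trans_le (hQk' _))).2 hj⟩

end LevelSets

section GridCorners

/-- The left end of the cell containing `x` in a division of `[0, m)` into at most `r` intervals
of equal length `m / r + 1`. -/
def cellStart (m r x : ℕ) : ℕ := x / (m / r + 1) * (m / r + 1)

lemma cellStart_le (m r x : ℕ) : cellStart m r x ≤ x := Nat.div_mul_le_self _ _

lemma sub_div_le_cellStart (m r x : ℕ) : x - m / r ≤ cellStart m r x := by
  have : x < cellStart m r x + (m / r + 1) := Nat.lt_div_mul_add (Nat.succ_pos (m / r))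
  omega

lemma div_cellLength_lt {m r x : ℕ} (hr : 0 < r) (hx : x < m) : x / (m / r + 1) < r :=
  Nat.div_lt_of_lt_mul (hx.trans (by rw [mul_comm]; exact Nat.lt_mul_div_succ m hr))

lemma sum_tsub_sub_le {h : ℕ → ℝ} (hh : Antitone h) (h_nonneg : ∀ x, 0 ≤ h x) (N v : ℕ) :
    ∑ x ∈ range N, (h (x - v) - h x) ≤ v * h 0 := by
  calc ∑ x ∈ range N, (h (x - v) - h x)
      ≤ ∑ x ∈ range (v + N), (h (x - v) - h x) :=
        sum_le_sum_of_subset_of_nonneg (range_mono (Nat.le_add_left N v)) fun x _ _ =>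
          sub_nonneg.2 (hh (Nat.sub_le x v))
    _ = ∑ x ∈ range v, h (x - v) + ∑ x ∈ range N, h x - ∑ x ∈ range (v + N), h x := by
        simp only [sum_sub_distrib, sum_range_add, Nat.add_sub_cancel_left]
    _ ≤ ∑ x ∈ range v, h (x - v) :=
        sub_le_iff_le_add.2 (add_le_add_right (sum_le_sum_of_subset_of_nonneg
          (range_mono (Nat.le_add_left N v)) fun x _ _ => h_nonneg x) _)
    _ ≤ ∑ _x ∈ range v, h 0 := sum_le_sum fun x _ => hh (Nat.zero_le _)
    _ = v * h 0 := by rw [sum_const, card_range, nsmul_eq_mul]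

lemma sum_cellStart_sub_le {h : ℕ → ℝ} (hh : Antitone h) (h_nonneg : ∀ x, 0 ≤ h x) (m r : ℕ) :
    ∑ x ∈ range m, (h (cellStart m r x) - h x) ≤ m / r * h 0 :=
  calc ∑ x ∈ range m, (h (cellStart m r x) - h x)
      ≤ ∑ x ∈ range m, (h (x - m / r) - h x) :=
        sum_le_sum fun x _ => sub_le_sub_right (hh (sub_div_le_cellStart m r x)) _
    _ ≤ (m / r : ℕ) * h 0 := sum_tsub_sub_le hh h_nonneg m (m / r)
    _ ≤ m / r * h 0 := mul_le_mul_of_nonneg_right Nat.cast_div_le (h_nonneg 0)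

/-- The least corner of the cell containing `z` in the division of `[0, m) × [0, n)` into at most
`r × r` rectangles. -/
def gridCorner (m n r : ℕ) (z : ℕ × ℕ) : ℕ × ℕ := (cellStart m r z.1, cellStart n r z.2)

lemma gridCorner_le (m n r : ℕ) (z : ℕ × ℕ) : gridCorner m n r z ≤ z :=
  ⟨cellStart_le m r z.1, cellStart_le n r z.2⟩

/-- The antitone functions on the quadrant with values in `[0, 1]`. -/
def unitAntitone : Set (ℕ × ℕ → ℝ) := {f | Antitone f ∧ ∀ z, f z ∈ Set.Icc 0 1}

variable {f g : ℕ × ℕ → ℝ}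

lemma sum_gridCorner_sub_le (hf : f ∈ unitAntitone) (m n r : ℕ) :
    ∑ z ∈ range m ×ˢ range n, (f (gridCorner m n r z) - f z) ≤ 2 * (m * n) / r := by
  obtain ⟨hanti, hunit⟩ := hf
  have hrow : ∀ x, ∑ y ∈ range n, (f (x, cellStart n r y) - f (x, y)) ≤ n / r := fun x =>
    (sum_cellStart_sub_le (h := fun y => f (x, y)) (fun _ _ h => hanti ⟨le_rfl, h⟩)
      (fun _ => (hunit _).1) n r).trans (mul_le_of_le_one_right (by positivity) (hunit _).2)
  have hcol : ∀ y, ∑ x ∈ range m, (f (cellStart m r x, y) - f (x, y)) ≤ m / r := fun y =>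
    (sum_cellStart_sub_le (h := fun x => f (x, y)) (fun _ _ h => hanti ⟨h, le_rfl⟩)
      (fun _ => (hunit _).1) m r).trans (mul_le_of_le_one_right (by positivity) (hunit _).2)
  calc ∑ z ∈ range m ×ˢ range n, (f (gridCorner m n r z) - f z)
      = ∑ x ∈ range m, ∑ y ∈ range n,
            (f (cellStart m r x, cellStart n r y) - f (cellStart m r x, y)) +
          ∑ y ∈ range n, ∑ x ∈ range m, (f (cellStart m r x, y) - f (x, y)) := by
        rw [sum_comm (s := range n), ← sum_add_distrib, sum_product]
        simp only [← sum_add_distrib, sub_add_sub_cancel, gridCorner]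
    _ ≤ ∑ _x ∈ range m, (n / r : ℝ) + ∑ _y ∈ range n, (m / r : ℝ) :=
        add_le_add (sum_le_sum fun _ _ => hrow _) (sum_le_sum fun y _ => hcol y)
    _ = 2 * (m * n) / r := by
        simp only [sum_const, card_range, nsmul_eq_mul]
        ring

lemma sum_abs_gridCorner_sub_le (hf : f ∈ unitAntitone) (hg : g ∈ unitAntitone) (m n r : ℕ) :
    ∑ z ∈ range m ×ˢ range n,
        |(f - g) (gridCorner m n r z) - (f - g) z| ≤ 4 * (m * n) / r := by
  calc ∑ z ∈ range m ×ˢ range n, |(f - g) (gridCorner m n r z) - (f - g) z|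
      ≤ ∑ z ∈ range m ×ˢ range n,
          ((f (gridCorner m n r z) - f z) + (g (gridCorner m n r z) - g z)) :=
        sum_le_sum fun z _ => by
          have hf_le := hf.1 (gridCorner_le m n r z)
          have hg_le := hg.1 (gridCorner_le m n r z)
          simp only [Pi.sub_apply]
          exact abs_le.2 ⟨by linarith, by linarith⟩
    _ ≤ 2 * (m * n) / r + 2 * (m * n) / r := by
        rw [sum_add_distrib]
        exact add_le_add (sum_gridCorner_sub_le hf m n r) (sum_gridCorner_sub_le hg m n r)
    _ = 4 * (m * n) / r := by ring

lemma abs_sub_le_of_floor_eq {x y : ℝ} (hx : 0 ≤ x) (hy : 0 ≤ y) (h : ⌊x⌋₊ = ⌊y⌋₊) :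
    |x - y| ≤ 1 := by
  have hxy : ⌊x⌋ = ⌊y⌋ := by
    rw [← Int.natCast_floor_eq_floor hx, ← Int.natCast_floor_eq_floor hy, h]
  exact (Int.abs_sub_lt_one_of_floor_eq_floor hxy).le

/-- The values of `f` at the grid corners, in units of `r / K` and rounded down. -/
def quantizedCorners (m n r K : ℕ) (f : ℕ × ℕ → ℝ) (u : ℕ × ℕ) : ℕ :=
  ⌊K * f (u.1 * (m / r + 1), u.2 * (n / r + 1)) / r⌋₊

lemma antitone_quantizedCorners (hf : Antitone f) (m n r K : ℕ) :
    Antitone (quantizedCorners m n r K f) := fun u v huv => by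
  have : f (v.1 * (m / r + 1), v.2 * (n / r + 1)) ≤ f (u.1 * (m / r + 1), u.2 * (n / r + 1)) :=
    hf ⟨Nat.mul_le_mul_right _ huv.1, Nat.mul_le_mul_right _ huv.2⟩
  simp only [quantizedCorners]
  gcongr

lemma quantizedCorners_le (hf : ∀ z, f z ≤ 1) (m n r K : ℕ) (u : ℕ × ℕ) :
    quantizedCorners m n r K f u ≤ K / r := by
  rw [← Nat.floor_div_eq_div (K := ℝ)]
  exact Nat.floor_le_floor (by gcongr; exact mul_le_of_le_one_right (by positivity) (hf _))

lemma hasCoding_gridCorner (m n : ℕ) {r K : ℕ} (hr : 0 < r) (hK : 0 < K) :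
    HasCoding unitAntitone (fun f g => ∀ z ∈ range m ×ˢ range n,
      |(f - g) (gridCorner m n r z)| ≤ r / K) (4 ^ K) := by
  have hcard : 2 ^ ((r + r) * (K / r)) ≤ 4 ^ K := by
    calc 2 ^ ((r + r) * (K / r)) = 4 ^ (r * (K / r)) := by
          rw [← two_mul, mul_assoc, pow_mul]
          norm_num
      _ ≤ 4 ^ K := Nat.pow_le_pow_right (by norm_num) (Nat.mul_div_le K r)
  refine (((hasCoding_antitone_grid r r (K / r)).comap (φ := quantizedCorners m n r K)
    fun f hf => ⟨antitone_quantizedCorners hf.1 m n r K,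
      quantizedCorners_le (fun z => (hf.2 z).2) m n r K⟩).mono hcard).imp ?_
  intro f hf g hg hfg z hz
  obtain ⟨hz₁, hz₂⟩ : z.1 < m ∧ z.2 < n := by simpa only [mem_product, mem_range] using hz
  have hfloor := abs_sub_le_of_floor_eq
    (div_nonneg (mul_nonneg K.cast_nonneg (hf.2 _).1) r.cast_nonneg)
    (div_nonneg (mul_nonneg K.cast_nonneg (hg.2 _).1) r.cast_nonneg)
    (hfg (z.1 / (m / r + 1), z.2 / (n / r + 1)) (div_cellLength_lt hr hz₁)
      (div_cellLength_lt hr hz₂))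
  have hscale : (0 : ℝ) < K / r := by positivity
  rw [← sub_div, ← mul_sub, mul_div_right_comm, abs_mul, abs_of_pos hscale,
    ← le_div_iff₀' hscale, one_div_div] at hfloor
  exact hfloor

end GridCorners

section Chaining

lemma sum_sq_le_add_mul_sum_abs_sub {ι : Type*} {s : Finset ι} {u v : ι → ℝ} {B : ℝ}
    (hB : ∀ i ∈ s, |u i| + |v i| ≤ B) :
    ∑ i ∈ s, u i ^ 2 ≤ ∑ i ∈ s, v i ^ 2 + B * ∑ i ∈ s, |u i - v i| := by
  rw [mul_sum, ← sum_add_distrib]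
  refine sum_le_sum fun i hi => ?_
  have hfactor : u i ^ 2 - v i ^ 2 ≤ B * |u i - v i| := by
    calc u i ^ 2 - v i ^ 2 = (u i + v i) * (u i - v i) := sq_sub_sq _ _
      _ ≤ |u i + v i| * |u i - v i| := by rw [← abs_mul]; exact le_abs_self _
      _ ≤ B * |u i - v i| := by gcongr; exact (abs_add_le _ _).trans (hB i hi)
  linarith

variable {f g : ℕ × ℕ → ℝ} {m n S K : ℕ}

lemma sum_abs_gridCorner_succ_sub_le (hf : f ∈ unitAntitone) (hg : g ∈ unitAntitone)
    (m n s : ℕ) :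
    ∑ z ∈ range m ×ˢ range n,
        |(f - g) (gridCorner m n (2 ^ (s + 1)) z) - (f - g) (gridCorner m n (2 ^ s) z)| ≤
      6 * (m * n) / 2 ^ s := by
  calc ∑ z ∈ range m ×ˢ range n,
        |(f - g) (gridCorner m n (2 ^ (s + 1)) z) - (f - g) (gridCorner m n (2 ^ s) z)|
      ≤ ∑ z ∈ range m ×ˢ range n, (|(f - g) (gridCorner m n (2 ^ (s + 1)) z) - (f - g) z| +
          |(f - g) (gridCorner m n (2 ^ s) z) - (f - g) z|) :=
        sum_le_sum fun z _ => by
          rw [abs_sub_comm ((f - g) (gridCorner m n (2 ^ s) z))]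
          exact abs_sub_le _ _ _
    _ ≤ 4 * (m * n) / (2 ^ (s + 1) : ℕ) + 4 * (m * n) / (2 ^ s : ℕ) := by
        rw [sum_add_distrib]
        exact add_le_add (sum_abs_gridCorner_sub_le hf hg m n _)
          (sum_abs_gridCorner_sub_le hf hg m n _)
    _ = 6 * (m * n) / 2 ^ s := by
        push_cast
        field_simp
        ring

lemma sum_sq_gridCorner_le (hf : f ∈ unitAntitone) (hg : g ∈ unitAntitone)
    (hclose : ∀ s ≤ S, ∀ z ∈ range m ×ˢ range n, |(f - g) (gridCorner m n (2 ^ s) z)| ≤ 2 ^ s / K) :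
    ∑ z ∈ range m ×ˢ range n, (f - g) (gridCorner m n (2 ^ S) z) ^ 2 ≤
      m * n * (18 * (S + 1) / K) := by
  induction S with
  | zero =>
    calc ∑ z ∈ range m ×ˢ range n, (f - g) (gridCorner m n (2 ^ 0) z) ^ 2
        ≤ ∑ _z ∈ range m ×ˢ range n, (1 / K : ℝ) := sum_le_sum fun z hz => by
          have hz_close := hclose 0 le_rfl z hz
          rw [pow_zero] at hz_close
          rw [← sq_abs]
          exact (pow_le_of_le_one (abs_nonneg _)
            (hz_close.trans (one_div (K : ℝ) ▸ Nat.cast_inv_le_one K)) two_ne_zero).trans hz_close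
      _ = m * n * (1 / K) := by simp only [sum_const, card_product, card_range, nsmul_eq_mul,
          Nat.cast_mul]
      _ ≤ m * n * (18 * ((0 : ℕ) + 1) / K) := by gcongr; norm_num
  | succ S ih =>
    calc ∑ z ∈ range m ×ˢ range n, (f - g) (gridCorner m n (2 ^ (S + 1)) z) ^ 2
        ≤ ∑ z ∈ range m ×ˢ range n, (f - g) (gridCorner m n (2 ^ S) z) ^ 2 +
            (2 ^ (S + 1) / K + 2 ^ S / K) * ∑ z ∈ range m ×ˢ range n,
              |(f - g) (gridCorner m n (2 ^ (S + 1)) z) - (f - g) (gridCorner m n (2 ^ S) z)| :=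
          sum_sq_le_add_mul_sum_abs_sub fun z hz =>
            add_le_add (hclose (S + 1) le_rfl z hz) (hclose S S.le_succ z hz)
      _ ≤ m * n * (18 * (S + 1) / K) +
            (2 ^ (S + 1) / K + 2 ^ S / K) * (6 * (m * n) / 2 ^ S) := by
          gcongr
          · exact ih fun s hs => hclose s (hs.trans S.le_succ)
          · exact sum_abs_gridCorner_succ_sub_le hf hg m n S
      _ = m * n * (18 * ((S + 1 : ℕ) + 1) / K) := by
          push_cast
          field_simp
          ring

lemma sum_sq_sub_le_of_gridCorner_close (hf : f ∈ unitAntitone) (hg : g ∈ unitAntitone)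
    (hclose : ∀ s ≤ S, ∀ z ∈ range m ×ˢ range n, |(f - g) (gridCorner m n (2 ^ s) z)| ≤ 2 ^ s / K) :
    ∑ z ∈ range m ×ˢ range n, (f - g) z ^ 2 ≤ m * n * (18 * (S + 1) / K + 8 / 2 ^ S) := by
  have habs : ∀ z, |(f - g) z| ≤ 1 := fun z =>
    abs_sub_le_of_nonneg_of_le (hf.2 z).1 (hf.2 z).2 (hg.2 z).1 (hg.2 z).2
  calc ∑ z ∈ range m ×ˢ range n, (f - g) z ^ 2
      ≤ ∑ z ∈ range m ×ˢ range n, (f - g) (gridCorner m n (2 ^ S) z) ^ 2 +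
          (1 + 1) * ∑ z ∈ range m ×ˢ range n, |(f - g) z - (f - g) (gridCorner m n (2 ^ S) z)| :=
        sum_sq_le_add_mul_sum_abs_sub fun z _ => add_le_add (habs z) (habs _)
    _ ≤ m * n * (18 * (S + 1) / K) + (1 + 1) * (4 * (m * n) / (2 ^ S : ℕ)) := by
        gcongr
        · exact sum_sq_gridCorner_le hf hg hclose
        · exact (sum_congr rfl fun z _ => abs_sub_comm _ _).trans_le
            (sum_abs_gridCorner_sub_le hf hg m n _)
    _ = m * n * (18 * (S + 1) / K + 8 / 2 ^ S) := by
        push_cast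
        ring

lemma hasCoding_unitAntitone (m n S : ℕ) (hK : 0 < K) :
    HasCoding unitAntitone
      (fun f g => ∑ z ∈ range m ×ˢ range n, (f - g) z ^ 2 ≤
        m * n * (18 * (S + 1) / K + 8 / 2 ^ S))
      (4 ^ (K * (S + 1))) := by
  have hcoding := HasCoding.pi fun s : Fin (S + 1) =>
    hasCoding_gridCorner m n (r := 2 ^ (s : ℕ)) (by positivity) hK
  rw [prod_const, card_fin, ← pow_mul] at hcoding
  refine hcoding.imp fun f hf g hg hclose =>
    sum_sq_sub_le_of_gridCorner_close hf hg fun s hs z hz => ?_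
  simpa only [Nat.cast_pow, Nat.cast_ofNat] using hclose ⟨s, Nat.lt_succ_of_le hs⟩ z hz

end Chaining

section DyadicBlocks

/-- The nonnegative antitone functions on the quadrant satisfying the pointwise bound that
monotonicity and a unit `ℓ²` norm force. -/
def hyperbolicAntitone : Set (ℕ × ℕ → ℝ) :=
  {f | Antitone f ∧ (∀ z, 0 ≤ f z) ∧ ∀ z : ℕ × ℕ, ((z.1 : ℝ) + 1) * (z.2 + 1) * f z ^ 2 ≤ 1}

/-- The restriction of `f` to the dyadic block with least corner `(2 ^ a - 1, 2 ^ b - 1)` and sides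
`2 ^ a`, `2 ^ b`, translated to the origin and normalized by the square root of the area. -/
def blockRescale (a b : ℕ) (f : ℕ × ℕ → ℝ) (z : ℕ × ℕ) : ℝ :=
  √(2 ^ a * 2 ^ b) * f (2 ^ a - 1 + z.1, 2 ^ b - 1 + z.2)

lemma mapsTo_blockRescale (a b : ℕ) :
    Set.MapsTo (blockRescale a b) hyperbolicAntitone unitAntitone := by
  rintro f ⟨hf, hf_nonneg, hf_bound⟩
  have hnonneg : ∀ z, 0 ≤ blockRescale a b f z := fun z =>
    mul_nonneg (Real.sqrt_nonneg _) (hf_nonneg _)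
  have two_pow_le : ∀ c x : ℕ, (2 : ℝ) ^ c ≤ (2 ^ c - 1 + x : ℕ) + 1 := fun c x => by
    have : 2 ^ c ≤ 2 ^ c - 1 + x + 1 := by omega
    exact_mod_cast this
  refine ⟨fun u v huv => mul_le_mul_of_nonneg_left (hf ⟨Nat.add_le_add_left huv.1 _,
    Nat.add_le_add_left huv.2 _⟩) (Real.sqrt_nonneg _), fun z => ⟨hnonneg z, ?_⟩⟩
  rw [← sq_le_one_iff₀ (hnonneg z), blockRescale, mul_pow, Real.sq_sqrt (by positivity)]
  refine le_trans ?_ (hf_bound (2 ^ a - 1 + z.1, 2 ^ b - 1 + z.2))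
  gcongr
  · exact two_pow_le a z.1
  · exact two_pow_le b z.2

lemma sq_sub_blockRescale (a b : ℕ) (f g : ℕ × ℕ → ℝ) (z : ℕ × ℕ) :
    (blockRescale a b f - blockRescale a b g) z ^ 2 =
      2 ^ a * 2 ^ b * (f - g) (2 ^ a - 1 + z.1, 2 ^ b - 1 + z.2) ^ 2 := by
  simp only [Pi.sub_apply, blockRescale]
  rw [← mul_sub, mul_pow, Real.sq_sqrt (by positivity)]

lemma sum_range_two_pow_sub_one {M : Type*} [AddCommMonoid M] (φ : ℕ → M) (A : ℕ) :
    ∑ p ∈ range (2 ^ A - 1), φ p = ∑ a ∈ range A, ∑ x ∈ range (2 ^ a), φ (2 ^ a - 1 + x) := by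
  induction A with
  | zero => rfl
  | succ A ih =>
    have hsplit : 2 ^ (A + 1) - 1 = 2 ^ A - 1 + 2 ^ A := by
      have := Nat.one_le_two_pow (n := A)
      omega
    rw [sum_range_succ, ← ih, hsplit, sum_range_add]

lemma sum_product_range_two_pow_sub_one {M : Type*} [AddCommMonoid M] (φ : ℕ × ℕ → M)
    (A B : ℕ) :
    ∑ z ∈ range (2 ^ A - 1) ×ˢ range (2 ^ B - 1), φ z =
      ∑ a ∈ range A, ∑ b ∈ range B, ∑ z ∈ range (2 ^ a) ×ˢ range (2 ^ b),
        φ (2 ^ a - 1 + z.1, 2 ^ b - 1 + z.2) := by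
  simp only [sum_product, sum_range_two_pow_sub_one]
  exact sum_congr rfl fun a _ => sum_comm

lemma hasCoding_hyperbolicAntitone (A B S : ℕ) {K : ℕ} (hK : 0 < K) :
    HasCoding hyperbolicAntitone
      (fun f g => ∑ z ∈ range (2 ^ A - 1) ×ˢ range (2 ^ B - 1), (f - g) z ^ 2 ≤
        A * B * (18 * (S + 1) / K + 8 / 2 ^ S))
      (4 ^ (K * (S + 1) * (A * B))) := by
  have hcoding := HasCoding.pi fun ab : Fin A × Fin B =>
    (hasCoding_unitAntitone (2 ^ (ab.1 : ℕ)) (2 ^ (ab.2 : ℕ)) S hK).comap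
      (mapsTo_blockRescale ab.1 ab.2)
  rw [prod_const, card_univ, Fintype.card_prod, Fintype.card_fin, Fintype.card_fin,
    ← pow_mul] at hcoding
  refine hcoding.imp fun f _ g _ hblock => ?_
  have hblock_le : ∀ a < A, ∀ b < B, ∑ z ∈ range (2 ^ a) ×ˢ range (2 ^ b),
      (f - g) (2 ^ a - 1 + z.1, 2 ^ b - 1 + z.2) ^ 2 ≤ 18 * (S + 1) / K + 8 / 2 ^ S :=
    fun a ha b hb => by
      have hab := hblock (⟨a, ha⟩, ⟨b, hb⟩)
      simp only [sq_sub_blockRescale, ← mul_sum, Nat.cast_pow, Nat.cast_ofNat] at hab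
      exact le_of_mul_le_mul_left hab (by positivity)
  rw [sum_product_range_two_pow_sub_one]
  calc _ ≤ ∑ _a ∈ range A, ∑ _b ∈ range B, (18 * (S + 1) / K + 8 / 2 ^ S : ℝ) :=
        sum_le_sum fun a ha => sum_le_sum fun b hb =>
          hblock_le a (mem_range.1 ha) b (mem_range.1 hb)
    _ = A * B * (18 * (S + 1) / K + 8 / 2 ^ S) := by
        simp only [sum_const, card_range, nsmul_eq_mul, mul_assoc]

end DyadicBlocks

section Matrices

variable {n1 n2 : ℕ} {θ : Fin n1 → Fin n2 → ℝ}

/-- The positive part of a matrix, indexed by the distances to the last row and column and extended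
by zero to the quadrant. -/
def reversedPosPart (θ : Fin n1 → Fin n2 → ℝ) (z : ℕ × ℕ) : ℝ :=
  if h : z.1 < n1 ∧ z.2 < n2 then (θ (Fin.rev ⟨z.1, h.1⟩) (Fin.rev ⟨z.2, h.2⟩))⁺ else 0

lemma reversedPosPart_val (θ : Fin n1 → Fin n2 → ℝ) (i : Fin n1) (j : Fin n2) :
    reversedPosPart θ (i, j) = (θ i.rev j.rev)⁺ :=
  dif_pos ⟨i.2, j.2⟩

lemma reversedPosPart_nonneg (θ : Fin n1 → Fin n2 → ℝ) (z : ℕ × ℕ) : 0 ≤ reversedPosPart θ z := by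
  unfold reversedPosPart
  split_ifs
  · exact posPart_nonneg _
  · exact le_rfl

lemma Isotonic.antitone_reversedPosPart (hθ : Isotonic θ) : Antitone (reversedPosPart θ) :=
  fun u v huv => by
    by_cases hv : v.1 < n1 ∧ v.2 < n2
    · rw [reversedPosPart, reversedPosPart, dif_pos hv,
        dif_pos ⟨huv.1.trans_lt hv.1, huv.2.trans_lt hv.2⟩]
      exact posPart_mono (hθ (Fin.rev_le_rev.2 huv.1) (Fin.rev_le_rev.2 huv.2))
    · rw [reversedPosPart, dif_neg hv]
      exact reversedPosPart_nonneg θ u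

lemma Isotonic.card_Ici_mul_sq_posPart_le_frobSq (hθ : Isotonic θ) (i : Fin n1) (j : Fin n2) :
    (#(Ici i) : ℝ) * #(Ici j) * (θ i j)⁺ ^ 2 ≤ frobSq θ :=
  calc (#(Ici i) : ℝ) * #(Ici j) * (θ i j)⁺ ^ 2
      = ∑ _k ∈ Ici i, ∑ _l ∈ Ici j, (θ i j)⁺ ^ 2 := by
        simp only [sum_const, nsmul_eq_mul, mul_assoc]
    _ ≤ ∑ k ∈ Ici i, ∑ l ∈ Ici j, θ k l ^ 2 :=
        sum_le_sum fun k hk => sum_le_sum fun l hl => by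
          rw [← sq_abs (θ k l)]
          gcongr
          exact sup_le ((hθ (mem_Ici.1 hk) (mem_Ici.1 hl)).trans (le_abs_self _)) (abs_nonneg _)
    _ ≤ ∑ k ∈ Ici i, ∑ l, θ k l ^ 2 := sum_le_sum fun k _ =>
        sum_le_sum_of_subset_of_nonneg (subset_univ _) fun _ _ _ => sq_nonneg _
    _ ≤ frobSq θ := sum_le_sum_of_subset_of_nonneg (subset_univ _) fun _ _ _ =>
        sum_nonneg fun _ _ => sq_nonneg _

/-- The isotonic matrices in the closed Frobenius unit ball. -/
def isotonicBall (n1 n2 : ℕ) : Set (Fin n1 → Fin n2 → ℝ) := {θ | Isotonic θ ∧ frobSq θ ≤ 1}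

lemma mapsTo_reversedPosPart : Set.MapsTo reversedPosPart (isotonicBall n1 n2)
    hyperbolicAntitone := by
  rintro θ ⟨hθ, hθ_norm⟩
  refine ⟨hθ.antitone_reversedPosPart, reversedPosPart_nonneg θ, fun z => ?_⟩
  have card_Ici_rev : ∀ {n : ℕ} (i : Fin n), (#(Ici i.rev) : ℝ) = i + 1 := fun {n} i => by
    rw [Fin.card_Ici, Fin.val_rev]
    norm_cast
    omega
  by_cases hz : z.1 < n1 ∧ z.2 < n2
  · have hbound := (hθ.card_Ici_mul_sq_posPart_le_frobSq (Fin.rev ⟨z.1, hz.1⟩)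
      (Fin.rev ⟨z.2, hz.2⟩)).trans hθ_norm
    rw [card_Ici_rev, card_Ici_rev] at hbound
    rwa [reversedPosPart, dif_pos hz]
  · rw [reversedPosPart, dif_neg hz, zero_pow two_ne_zero, mul_zero]
    exact zero_le_one

/-- The order-reversing symmetry of isotonic matrices, which exchanges positive and negative
parts. -/
def negRev (θ : Fin n1 → Fin n2 → ℝ) (i : Fin n1) (j : Fin n2) : ℝ := -θ i.rev j.rev

lemma sum_sum_rev {M : Type*} [AddCommMonoid M] (φ : Fin n1 → Fin n2 → M) :
    ∑ i, ∑ j, φ (Fin.rev i) (Fin.rev j) = ∑ i, ∑ j, φ i j := by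
  rw [← Equiv.sum_comp Fin.revPerm fun i => ∑ j, φ i j]
  exact sum_congr rfl fun i _ => Equiv.sum_comp Fin.revPerm (φ i.rev)

lemma mapsTo_negRev : Set.MapsTo negRev (isotonicBall n1 n2) (isotonicBall n1 n2) := by
  rintro θ ⟨hθ, hθ_norm⟩
  refine ⟨fun i k j l hik hjl => neg_le_neg (hθ (Fin.rev_le_rev.2 hik) (Fin.rev_le_rev.2 hjl)), ?_⟩
  simp only [frobSq, negRev, neg_sq]
  exact (sum_sum_rev fun i j => θ i j ^ 2).trans_le hθ_norm

lemma sum_sq_sub_reversedPosPart (θ θ' : Fin n1 → Fin n2 → ℝ) :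
    ∑ z ∈ range n1 ×ˢ range n2, (reversedPosPart θ - reversedPosPart θ') z ^ 2 =
      ∑ i, ∑ j, ((θ i j)⁺ - (θ' i j)⁺) ^ 2 := by
  simp only [sum_product, sum_range, Pi.sub_apply, reversedPosPart_val]
  exact sum_sum_rev fun i j => ((θ i j)⁺ - (θ' i j)⁺) ^ 2

lemma sq_sub_le_two_mul_posPart_add_negPart (x y : ℝ) :
    (x - y) ^ 2 ≤ 2 * ((x⁺ - y⁺) ^ 2 + (x⁻ - y⁻) ^ 2) := by
  calc (x - y) ^ 2 = ((x⁺ - y⁺) - (x⁻ - y⁻)) ^ 2 := by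
        rw [sub_sub_sub_comm, posPart_sub_negPart, posPart_sub_negPart]
    _ ≤ 2 * ((x⁺ - y⁺) ^ 2 + (x⁻ - y⁻) ^ 2) := by
        linarith [sq_nonneg ((x⁺ - y⁺) + (x⁻ - y⁻))]

lemma frobSq_sub_le (θ θ' : Fin n1 → Fin n2 → ℝ) :
    frobSq (θ - θ') ≤
      2 * (∑ z ∈ range n1 ×ˢ range n2, (reversedPosPart θ - reversedPosPart θ') z ^ 2 +
        ∑ z ∈ range n1 ×ˢ range n2,
          (reversedPosPart (negRev θ) - reversedPosPart (negRev θ')) z ^ 2) := by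
  have hneg : ∑ i, ∑ j, ((negRev θ i j)⁺ - (negRev θ' i j)⁺) ^ 2 =
      ∑ i, ∑ j, ((θ i j)⁻ - (θ' i j)⁻) ^ 2 := by
    simp only [negRev, posPart_neg]
    exact sum_sum_rev fun i j => ((θ i j)⁻ - (θ' i j)⁻) ^ 2
  rw [sum_sq_sub_reversedPosPart, sum_sq_sub_reversedPosPart, hneg]
  simp only [frobSq, mul_sum, ← sum_add_distrib]
  exact sum_le_sum fun i _ => sum_le_sum fun j _ => sq_sub_le_two_mul_posPart_add_negPart _ _

lemma hasCoding_isotonicBall {A B : ℕ} (hA : n1 < 2 ^ A) (hB : n2 < 2 ^ B) (S : ℕ) {K : ℕ}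
    (hK : 0 < K) :
    HasCoding (isotonicBall n1 n2)
      (fun θ θ' => frobSq (θ - θ') ≤ 4 * (A * B * (18 * (S + 1) / K + 8 / 2 ^ S)))
      (4 ^ (2 * (K * (S + 1) * (A * B)))) := by
  have hpos := (hasCoding_hyperbolicAntitone A B S hK).comap
    (mapsTo_reversedPosPart (n1 := n1) (n2 := n2))
  have hneg := hpos.comap mapsTo_negRev
  rw [two_mul, pow_add]
  have hbox : range n1 ×ˢ range n2 ⊆ range (2 ^ A - 1) ×ˢ range (2 ^ B - 1) :=
    product_subset_product (range_mono (Nat.le_sub_one_of_lt hA))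
      (range_mono (Nat.le_sub_one_of_lt hB))
  have sum_le_sum_box : ∀ f : ℕ × ℕ → ℝ, ∑ z ∈ range n1 ×ˢ range n2, f z ^ 2 ≤
      ∑ z ∈ range (2 ^ A - 1) ×ˢ range (2 ^ B - 1), f z ^ 2 := fun f =>
    sum_le_sum_of_subset_of_nonneg hbox fun _ _ _ => sq_nonneg _
  refine (hpos.and hneg).imp fun θ _ θ' _ ⟨hclose, hclose_neg⟩ => (frobSq_sub_le θ θ').trans ?_
  have := (sum_le_sum_box _).trans hclose
  have := (sum_le_sum_box _).trans hclose_neg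
  linarith

end Matrices

section CoveringNumber

variable {n1 n2 : ℕ} {ε : ℝ}

lemma coverNum_le_card {F : Set (Fin n1 → Fin n2 → ℝ)} {G : Finset (Fin n1 → Fin n2 → ℝ)}
    (hG : ∀ θ ∈ F, ∃ g ∈ G, frobSq (θ - g) ≤ ε ^ 2) : coverNum ε F ≤ #G :=
  Nat.sInf_le ⟨G, rfl, hG⟩

lemma HasCoding.coverNum_le {F : Set (Fin n1 → Fin n2 → ℝ)} {N : ℕ}
    (h : HasCoding F (fun θ θ' => frobSq (θ - θ') ≤ ε ^ 2) N) : coverNum ε F ≤ N := by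
  obtain ⟨G, hcard, hG⟩ := h.exists_finset
  exact (coverNum_le_card hG).trans hcard

lemma coverNum_isotonicBall_le_one (hε : 1 ≤ ε) : coverNum ε (isotonicBall n1 n2) ≤ 1 :=
  coverNum_le_card (G := {0}) fun θ hθ => ⟨0, mem_singleton_self 0, by
    rw [sub_zero]
    exact hθ.2.trans (one_le_pow₀ hε)⟩

lemma log_natCast_le_log_natCast {M N : ℕ} (hMN : M ≤ N) : Real.log M ≤ Real.log N := by
  rcases M.eq_zero_or_pos with rfl | hM
  · rw [Nat.cast_zero, Real.log_zero]
    exact Real.log_natCast_nonneg N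
  · exact Real.log_le_log (Nat.cast_pos.2 hM) (Nat.cast_le.2 hMN)

lemma log_natCast_le_two_mul_of_le_four_pow {M N : ℕ} (hMN : M ≤ 4 ^ N) :
    Real.log M ≤ 2 * N := by
  have hlog4 : Real.log 4 ≤ 2 := by
    rw [show (4 : ℝ) = 2 ^ 2 by norm_num, Real.log_pow]
    push_cast
    linarith [Real.log_two_lt_d9]
  calc Real.log M ≤ Real.log (4 ^ N : ℕ) := log_natCast_le_log_natCast hMN
    _ = N * Real.log 4 := by
        rw [Nat.cast_pow, Real.log_pow]
        norm_cast
    _ ≤ N * 2 := by gcongr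
    _ = 2 * N := mul_comm _ _

lemma exists_natCast_mem_Icc_self_two_mul {x : ℝ} (hx : 1 ≤ x) :
    ∃ K : ℕ, (K : ℝ) ∈ Set.Icc x (2 * x) := by
  refine ⟨⌈x⌉₊, Nat.le_ceil x, ?_⟩
  linarith [Nat.ceil_lt_add_one (zero_le_one.trans hx)]

lemma log_coverNum_isotonicBall_le {A B S : ℕ} (hA : n1 < 2 ^ A) (hB : n2 < 2 ^ B)
    (hA_pos : 0 < A) (hB_pos : 0 < B) (hε : 0 < ε) (hε1 : ε ≤ 1)
    (hS : 64 * (A * B) ≤ ε ^ 2 * 2 ^ S) :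
    Real.log (coverNum ε (isotonicBall n1 n2)) ≤ 1152 * (A * B * (S + 1)) ^ 2 / ε ^ 2 := by
  set M : ℝ := A * B * (S + 1) with hM
  have hM_one : 1 ≤ M := by
    rw [hM]
    exact_mod_cast Nat.mul_pos (Nat.mul_pos hA_pos hB_pos) S.succ_pos
  have hquot : 1 ≤ 144 * M / ε ^ 2 := by
    rw [one_le_div (by positivity)]
    linarith [pow_le_one₀ hε.le hε1 (n := 2)]
  obtain ⟨K, hK_ge, hK_le⟩ := exists_natCast_mem_Icc_self_two_mul hquot
  have hK : (0 : ℝ) < K := by linarith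
  have hradius : 4 * (A * B * (18 * (S + 1) / K + 8 / 2 ^ S)) ≤ ε ^ 2 := by
    have hquantization : 72 * M / K ≤ ε ^ 2 / 2 := by
      rw [div_le_iff₀ (by positivity)] at hK_ge ⊢
      linarith
    have hdiscretization : 32 * (A * B) / 2 ^ S ≤ ε ^ 2 / 2 := by
      rw [div_le_iff₀ (by positivity)]
      linarith
    calc 4 * (A * B * (18 * (S + 1) / K + 8 / 2 ^ S))
        = 72 * M / K + 32 * (A * B) / 2 ^ S := by ring
      _ ≤ ε ^ 2 / 2 + ε ^ 2 / 2 := add_le_add hquantization hdiscretization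
      _ = ε ^ 2 := add_halves _
  have hcover : coverNum ε (isotonicBall n1 n2) ≤ 4 ^ (2 * (K * (S + 1) * (A * B))) :=
    ((hasCoding_isotonicBall hA hB S (Nat.cast_pos.1 hK)).imp
      fun _ _ _ _ h => h.trans hradius).coverNum_le
  calc Real.log (coverNum ε (isotonicBall n1 n2))
      ≤ 2 * (2 * (K * (S + 1) * (A * B)) : ℕ) := log_natCast_le_two_mul_of_le_four_pow hcover
    _ = 4 * M * K := by
        push_cast
        ring
    _ ≤ 4 * M * (2 * (144 * M / ε ^ 2)) := by gcongr
    _ = 1152 * M ^ 2 / ε ^ 2 := by ring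

lemma natLog_two_add_one_le {n : ℕ} (hn : 1 < n) :
    ((Nat.log 2 n + 1 : ℕ) : ℝ) ≤ 3 * Real.log n := by
  have hlog_pos : (1 : ℝ) ≤ Nat.log 2 n := by
    exact_mod_cast Nat.log_pos one_lt_two hn
  have hlog_mul : (Nat.log 2 n : ℝ) * Real.log 2 ≤ Real.log n := by
    rw [← le_div_iff₀ (Real.log_pos one_lt_two)]
    exact Real.natLog_le_logb n 2
  push_cast
  nlinarith [Real.log_two_gt_d9]

lemma pow_le_two_pow_ceil_log {X : ℝ} (hX : 1 ≤ X) (n : ℕ) :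
    X ^ n ≤ 2 ^ ⌈3 / 2 * n * Real.log X⌉₊ := by
  have hlogX : 0 ≤ Real.log X := Real.log_nonneg hX
  rw [← Real.log_le_log_iff (by positivity) (by positivity), Real.log_pow, Real.log_pow]
  calc n * Real.log X ≤ 3 / 2 * n * Real.log X * Real.log 2 := by
        have : 0 ≤ n * Real.log X := by positivity
        nlinarith [Real.log_two_gt_d9]
    _ ≤ ⌈3 / 2 * n * Real.log X⌉₊ * Real.log 2 :=
        mul_le_mul_of_nonneg_right (Nat.le_ceil _) (Real.log_pos one_lt_two).le

lemma exp_one_le_four_mul_sqrt_div {L : ℝ} (hL : Real.log 2 ^ 2 ≤ L) (hε : 0 < ε) (hε1 : ε ≤ 1) :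
    Real.exp 1 ≤ 4 * √L / ε := by
  have hsqrt : Real.log 2 ≤ √L := Real.le_sqrt_of_sq_le hL
  rw [le_div_iff₀ hε]
  calc Real.exp 1 * ε ≤ Real.exp 1 := mul_le_of_le_one_right (Real.exp_pos 1).le hε1
    _ ≤ 4 * √L := by linarith [Real.exp_one_lt_d9, Real.log_two_gt_d9]

/- The scale is chosen so that `2 ^ S` exceeds `36 * X ^ 2 = 64 * 9 * L / ε ^ 2`. -/
lemma exists_finest_scale {L : ℝ} (hL : Real.log 2 ^ 2 ≤ L) (hε : 0 < ε) (hε1 : ε ≤ 1) :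
    ∃ S : ℕ, 64 * (9 * L) ≤ ε ^ 2 * 2 ^ S ∧ (S : ℝ) + 1 ≤ 11 * Real.log (4 * √L / ε) := by
  have hX := exp_one_le_four_mul_sqrt_div hL hε hε1
  set X := 4 * √L / ε with hX_def
  have hX_ge : 2.7 ≤ X := by linarith [Real.exp_one_gt_d9]
  have hlogX : 1 ≤ Real.log X := (Real.le_log_iff_exp_le (by linarith)).2 hX
  refine ⟨⌈3 / 2 * (6 : ℕ) * Real.log X⌉₊, ?_, ?_⟩
  · calc 64 * (9 * L) = ε ^ 2 * (36 * X ^ 2) := by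
          rw [hX_def, div_pow, mul_pow, Real.sq_sqrt ((sq_nonneg _).trans hL)]
          field_simp
          ring
      _ ≤ ε ^ 2 * (X ^ 4 * X ^ 2) := by
          gcongr
          calc (36 : ℝ) ≤ 2.7 ^ 4 := by norm_num
            _ ≤ X ^ 4 := by gcongr
      _ = ε ^ 2 * X ^ 6 := by ring
      _ ≤ ε ^ 2 * 2 ^ ⌈3 / 2 * (6 : ℕ) * Real.log X⌉₊ := by
          gcongr
          exact pow_le_two_pow_ceil_log (by linarith) 6
  · have := Nat.ceil_lt_add_one (a := 3 / 2 * (6 : ℕ) * Real.log X) (by positivity)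
    push_cast at this ⊢
    linarith

end CoveringNumber

/-- **Theorem 5, inequality (sdb.eq) (metric entropy of the isotonic Frobenius ball).**
There is a universal constant `C > 0` such that for every `ε > 0` and all
`n1, n2 > 1`,
`log N(ε, B(0,1)) ≤ C (log n1)² (log n2)² / ε² · [log(4 sqrt(log n1 log n2)/ε)]²`. -/
theorem isotonic_ball_metric_entropy :
    ∃ C : ℝ, 0 < C ∧
      ∀ (n1 n2 : ℕ), 1 < n1 → 1 < n2 → ∀ ε : ℝ, 0 < ε →
        Real.log (coverNum ε {θ : Fin n1 → Fin n2 → ℝ | Isotonic θ ∧ frobSq θ ≤ 1}) ≤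
          C * (Real.log n1 ^ 2 * Real.log n2 ^ 2 / ε ^ 2) *
            Real.log (4 * Real.sqrt (Real.log n1 * Real.log n2) / ε) ^ 2 := by
  refine ⟨1152 * (9 * 11) ^ 2, by norm_num, fun n1 n2 hn1 hn2 ε hε => ?_⟩
  rcases le_or_gt 1 ε with hε1 | hε1
  · exact (Real.log_nonpos (Nat.cast_nonneg _)
      (Nat.cast_le_one.2 (coverNum_isotonicBall_le_one hε1))).trans (by positivity)
  have hlog : ∀ {n : ℕ}, 1 < n → Real.log 2 ≤ Real.log n := fun hn =>
    Real.log_le_log two_pos (Nat.ofNat_le_cast.2 hn)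
  have hL : Real.log 2 ^ 2 ≤ Real.log n1 * Real.log n2 :=
    (sq _).trans_le (mul_le_mul (hlog hn1) (hlog hn2) (Real.log_pos one_lt_two).le
      (Real.log_natCast_nonneg n1))
  obtain ⟨S, hS_ge, hS_le⟩ := exists_finest_scale hL hε hε1.le
  set A := Nat.log 2 n1 + 1
  set B := Nat.log 2 n2 + 1
  have hAB : (A : ℝ) * B ≤ 9 * (Real.log n1 * Real.log n2) :=
    (mul_le_mul (natLog_two_add_one_le hn1) (natLog_two_add_one_le hn2) (Nat.cast_nonneg B)
      (by positivity)).trans_eq (by ring)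
  calc Real.log (coverNum ε (isotonicBall n1 n2))
      ≤ 1152 * (A * B * (S + 1)) ^ 2 / ε ^ 2 :=
        log_coverNum_isotonicBall_le (Nat.lt_pow_succ_log_self one_lt_two n1)
          (Nat.lt_pow_succ_log_self one_lt_two n2) (Nat.succ_pos _) (Nat.succ_pos _) hε hε1.le
          (by linarith)
    _ ≤ 1152 * (9 * (Real.log n1 * Real.log n2) *
          (11 * Real.log (4 * √(Real.log n1 * Real.log n2) / ε))) ^ 2 / ε ^ 2 := by gcongr
    _ = _ := by ring
end
end

section
/- For every isotonic matrix θ ∈ M with Frobenius norm at most 1 (i.e., Σ_{i,j} θ_{ij}² ≤ 1), and for every 1 ≤ i ≤ n1 and 1 ≤ j ≤ n2, the entrywise bound |θ_{ij}| ≤ max( 1/sqrt(i·j), 1/sqrt((n1 − i + 1)(n2 − j + 1)) ) holds. -/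
open MeasureTheory ProbabilityTheory

noncomputable section

/-!
If `f` is monotone and `0 ≤ f a`, then `f a ^ 2` is a lower bound for the squares of all entries
above `a`; their sum is at most `C`, so `#(Ici a) * f a ^ 2 ≤ C`. Applied to `-f` on the order dual,
this bounds `-f a` with `Iic a` in place of `Ici a`. An isotonic matrix is a monotone function on
the product order `Fin n1 × Fin n2`, in which the principal up- and down-sets are rectangles.
-/

lemma card_Ici_mul_sq_le_sum_sq {ι R : Type*} [Fintype ι] [Preorder ι] [LocallyFiniteOrderTop ι]
    [Ring R] [LinearOrder R] [IsOrderedRing R] {f : ι → R} (hf : Monotone f) {a : ι}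
    (ha : 0 ≤ f a) : ((Finset.Ici a).card : R) * f a ^ 2 ≤ ∑ x, f x ^ 2 :=
  calc ((Finset.Ici a).card : R) * f a ^ 2 = (Finset.Ici a).card • f a ^ 2 :=
        (nsmul_eq_mul _ _).symm
    _ ≤ ∑ x ∈ Finset.Ici a, f x ^ 2 :=
        Finset.card_nsmul_le_sum _ _ _ fun _ hx => pow_le_pow_left₀ ha (hf (Finset.mem_Ici.1 hx)) 2
    _ ≤ ∑ x, f x ^ 2 := Finset.sum_le_univ_sum_of_nonneg fun _ => sq_nonneg _

lemma le_sqrt_div_card_Ici {ι : Type*} [Fintype ι] [Preorder ι] [LocallyFiniteOrderTop ι]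
    {f : ι → ℝ} (hf : Monotone f) {C : ℝ} (hC : ∑ x, f x ^ 2 ≤ C) (a : ι) :
    f a ≤ √(C / (Finset.Ici a).card) := by
  rcases le_total (f a) 0 with nonpos | nonneg
  · exact nonpos.trans (Real.sqrt_nonneg _)
  · have card_pos : (0 : ℝ) < (Finset.Ici a).card := mod_cast Finset.nonempty_Ici.card_pos
    exact Real.le_sqrt_of_sq_le <|
      (le_div_iff₀' card_pos).2 <| (card_Ici_mul_sq_le_sum_sq hf nonneg).trans hC

lemma neg_le_sqrt_div_card_Iic {ι : Type*} [Fintype ι] [Preorder ι] [LocallyFiniteOrderBot ι]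
    {f : ι → ℝ} (hf : Monotone f) {C : ℝ} (hC : ∑ x, f x ^ 2 ≤ C) (a : ι) :
    -f a ≤ √(C / (Finset.Iic a).card) := by
  have neg_mono : Monotone fun x : ιᵒᵈ => -f (OrderDual.ofDual x) := fun _ _ h => neg_le_neg (hf h)
  have neg_ball : ∑ x : ιᵒᵈ, (-f (OrderDual.ofDual x)) ^ 2 ≤ C := by
    simpa only [neg_sq, OrderDual.ofDual.sum_comp fun x => f x ^ 2] using hC
  simpa only [OrderDual.ofDual_toDual, Finset.Ici_toDual, Finset.card_map] using
    le_sqrt_div_card_Ici neg_mono neg_ball (OrderDual.toDual a)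

theorem isotonic_ball_entrywise_bound_general {ι : Type*} [Fintype ι] [Preorder ι]
    [LocallyFiniteOrderTop ι] [LocallyFiniteOrderBot ι] {f : ι → ℝ} (hf : Monotone f) {C : ℝ}
    (hC : ∑ x, f x ^ 2 ≤ C) (a : ι) :
    |f a| ≤ max √(C / (Finset.Iic a).card) √(C / (Finset.Ici a).card) :=
  abs_le'.2 ⟨le_max_of_le_right (le_sqrt_div_card_Ici hf hC a),
    le_max_of_le_left (neg_le_sqrt_div_card_Iic hf hC a)⟩

lemma Isotonic.monotone_uncurry {n1 n2 : ℕ} {θ : Fin n1 → Fin n2 → ℝ} (hθ : Isotonic θ) :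
    Monotone (Function.uncurry θ) :=
  fun _ _ h => hθ h.1 h.2

lemma frobSq_eq_sum_uncurry_sq {n1 n2 : ℕ} (θ : Fin n1 → Fin n2 → ℝ) :
    frobSq θ = ∑ p, Function.uncurry θ p ^ 2 :=
  (Fintype.sum_prod_type' fun i j => θ i j ^ 2).symm

/-- **Lemma 2 (entrywise bound on the Frobenius unit ball).** For every isotonic matrix
`θ` with `Σ_{i,j} θ_{ij}² ≤ 1` and all indices `i, j` (here `0`-based, so the
`1`-based index `i` of the paper is `i+1`),
`|θ_{ij}| ≤ max(1/sqrt(i j), 1/sqrt((n1 − i + 1)(n2 − j + 1)))`. -/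
theorem isotonic_ball_entrywise_bound {n1 n2 : ℕ}
    (θ : Fin n1 → Fin n2 → ℝ) (hθ : Isotonic θ) (hball : frobSq θ ≤ 1)
    (i : Fin n1) (j : Fin n2) :
    |θ i j| ≤ max (1 / Real.sqrt ((i.1 + 1) * (j.1 + 1)))
        (1 / Real.sqrt ((n1 - i.1) * (n2 - j.1))) := by
  have hle := isotonic_ball_entrywise_bound_general hθ.monotone_uncurry
    ((frobSq_eq_sum_uncurry_sq θ).ge.trans hball) (i, j)
  simpa only [Function.uncurry_apply_pair, Real.sqrt_div zero_le_one, Real.sqrt_one,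
    Finset.card_Iic_prod, Finset.card_Ici_prod, Fin.card_Iic, Fin.card_Ici, Nat.cast_mul,
    Nat.cast_succ, Nat.cast_sub i.is_le', Nat.cast_sub j.is_le'] using hle
end
end
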